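/- Let 1 ≤ n ≤ d, let C be a compact, n-rectifiable subset of ℝ^d with H_n(C) > 0, and let A be any packing bound function. Then the limit as r → ∞ of A(rC)/H_n(rC) exists and equals δ_{A,n}; in particular it depends only on A and n, not on the choice of C or d. -/

import Mathlib

open scoped Pointwise
open MeasureTheory Bornology Filter

/-- The unit cube `[0,1]^n` in `ℝ^n`. -/
def unitCube (n : ℕ) : Set (EuclideanSpace ℝ (Fin n)) :=
  {x | ∀ i, x i ∈ Set.Icc (0 : ℝ) 1}

/-- A packing bound function: an assignment of a nonnegative real number to every bounded
Borel subset of every Euclidean space, satisfying the sphere bound, Lipschitz, union,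
and mesh axioms. -/
structure PackingBoundFunction where
  toFun : ∀ d : ℕ, Set (EuclideanSpace ℝ (Fin d)) → ℝ
  nonneg : ∀ (d : ℕ) (C : Set (EuclideanSpace ℝ (Fin d))),
    IsBounded C → MeasurableSet C → 0 ≤ toFun d C
  sphere_bound : ∀ (d : ℕ) (C : Set (EuclideanSpace ℝ (Fin d))),
    IsBounded C → MeasurableSet C → C.Nonempty →
    (∃ z, C ⊆ Metric.ball z 1) → toFun d C = 1
  lipschitz : ∀ (d d' : ℕ) (C : Set (EuclideanSpace ℝ (Fin d)))
    (C' : Set (EuclideanSpace ℝ (Fin d'))),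
    IsBounded C → MeasurableSet C → IsBounded C' → MeasurableSet C' →
    (∃ ψ : EuclideanSpace ℝ (Fin d) → EuclideanSpace ℝ (Fin d'),
      (∀ x ∈ C, ψ x ∈ C') ∧ ∀ x ∈ C, ∀ y ∈ C, dist x y ≤ dist (ψ x) (ψ y)) →
    toFun d C ≤ toFun d' C'
  union : ∀ (d : ℕ) (C C' : Set (EuclideanSpace ℝ (Fin d))),
    IsBounded C → MeasurableSet C → IsBounded C' → MeasurableSet C' →
    (∀ x ∈ C, ∀ x' ∈ C', 2 ≤ dist x x') →
    toFun d (C ∪ C') = toFun d C + toFun d C'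
  mesh : ∀ (ε : ℝ), 0 < ε → ∀ (d : ℕ) (C C' : Set (EuclideanSpace ℝ (Fin d))),
    IsBounded C → MeasurableSet C → IsBounded C' → MeasurableSet C' →
    C ⊆ Metric.thickening ε C' →
    toFun d ((1 / (1 + ε)) • C) ≤ toFun d C'

/-- The Euclidean limit `δ_{A,n}` of a packing bound function: the limit of
`A(2^k·[0,1]^n)/2^{kn}` as `k → ∞` (expressed as a `limsup`, which coincides with the
limit since the latter exists). -/
noncomputable def pbfDensity (A : PackingBoundFunction) (n : ℕ) : ℝ :=
  Filter.limsup (fun k : ℕ => A.toFun n ((2 : ℝ) ^ k • unitCube n) / 2 ^ (k * n)) Filter.atTop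

/-- Normalized `n`-dimensional Hausdorff measure on `ℝ^d`, normalized (by the factor
`L_n(B_1^n)/2^n`) so that it agrees with Lebesgue measure on `ℝ^n`. -/
noncomputable def normHausdorff (n d : ℕ) : Measure (EuclideanSpace ℝ (Fin d)) :=
  (volume (Metric.ball (0 : EuclideanSpace ℝ (Fin n)) 1) / 2 ^ n) •
    (MeasureTheory.Measure.hausdorffMeasure (n : ℝ) : Measure (EuclideanSpace ℝ (Fin d)))

/-! ### Isodiametric inequality by coordinate Steiner symmetrization -/

section Isodiametric

/-- length of a slice -/
noncomputable def sliceLen {n : ℕ} (i : Fin n) (S : Set (Fin n → ℝ)) (x : Fin n → ℝ) : ENNReal :=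
  volume {t : ℝ | Function.update x i t ∈ S}

/-- Steiner symmetrization in direction `i` -/
def steinerSym {n : ℕ} (i : Fin n) (S : Set (Fin n → ℝ)) : Set (Fin n → ℝ) :=
  {x | ENNReal.ofReal (2 * |x i|) < sliceLen i S x}

lemma sliceLen_update {n : ℕ} (i : Fin n) (S : Set (Fin n → ℝ)) (x : Fin n → ℝ) (t : ℝ) :
    sliceLen i S (Function.update x i t) = sliceLen i S x := by
  simp [sliceLen]

lemma sliceLen_eq {n : ℕ} (i : Fin n) (S : Set (Fin n → ℝ)) (hS : MeasurableSet S) :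
    sliceLen i S = lmarginal (fun _ : Fin n => (volume : Measure ℝ)) {i} (S.indicator 1) := by
  rw [lmarginal_singleton]
  ext x
  have : (fun t : ℝ => S.indicator (1 : (Fin n → ℝ) → ENNReal) (Function.update x i t)) =
      ({t : ℝ | Function.update x i t ∈ S}).indicator 1 := by
    ext t; simp [Set.indicator]
  rw [this, lintegral_indicator_one]
  · rfl
  · exact (measurable_update x) hS

lemma measurable_sliceLen {n : ℕ} (i : Fin n) (S : Set (Fin n → ℝ)) (hS : MeasurableSet S) :
    Measurable (sliceLen i S) := by
  rw [sliceLen_eq i S hS]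
  exact Measurable.lmarginal _ (measurable_one.indicator hS)

lemma measurableSet_steinerSym {n : ℕ} (i : Fin n) (S : Set (Fin n → ℝ)) (hS : MeasurableSet S) :
    MeasurableSet (steinerSym i S) := by
  apply measurableSet_lt
  · fun_prop
  · exact measurable_sliceLen i S hS

lemma volume_two_abs_lt (L : ENNReal) :
    volume {t : ℝ | ENNReal.ofReal (2 * |t|) < L} = L := by
  by_cases h : L = ⊤
  · subst h
    have : {t : ℝ | ENNReal.ofReal (2 * |t|) < ⊤} = Set.univ := by ext t; simp only [ENNReal.ofReal_lt_top, Set.mem_ofPred_eq, Set.mem_univ]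
    rw [this, Real.volume_univ]
  · lift L to NNReal using h
    have : {t : ℝ | ENNReal.ofReal (2 * |t|) < L} = Set.Ioo (-(L/2 : ℝ)) (L/2) := by
      ext t
      simp only [Set.mem_ofPred_eq, Set.mem_Ioo, ← abs_lt]
      rw [ENNReal.ofReal_lt_iff_lt_toReal (by positivity) (by simp)]
      simp only [ENNReal.coe_toReal]
      constructor <;> intro h <;> linarith
    rw [this, Real.volume_Ioo]
    simp

lemma volume_steinerSym {n : ℕ} (i : Fin n) (S : Set (Fin n → ℝ)) (hS : MeasurableSet S) :
    volume (steinerSym i S) = volume S := by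
  have h1 := measurableSet_steinerSym i S hS
  rw [← lintegral_indicator_one h1, ← lintegral_indicator_one hS]
  apply lintegral_eq_of_lmarginal_eq {i} (measurable_one.indicator h1) (measurable_one.indicator hS)
  rw [← sliceLen_eq i S hS, ← sliceLen_eq i _ h1]
  ext x
  conv_lhs => rw [sliceLen]
  have : {t : ℝ | Function.update x i t ∈ steinerSym i S} =
      {t : ℝ | ENNReal.ofReal (2 * |t|) < sliceLen i S x} := by
    ext t
    simp [steinerSym, sliceLen_update]
  rw [this, volume_two_abs_lt]

lemma exists_far_pair (P Q : Set ℝ) (a b : ℝ) (ha : 0 ≤ a) (hb : 0 ≤ b)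
    (hP : ENNReal.ofReal (2 * a) < volume P) (hQ : ENNReal.ofReal (2 * b) < volume Q) :
    ∃ p ∈ P, ∃ q ∈ Q, a + b ≤ |p - q| := by
  by_contra! hc
  have hPn : P.Nonempty := nonempty_of_measure_ne_zero (ne_bot_of_gt hP)
  have hQn : Q.Nonempty := nonempty_of_measure_ne_zero (ne_bot_of_gt hQ)
  obtain ⟨p0, hp0⟩ := hPn
  obtain ⟨q0, hq0⟩ := hQn
  have hPa : BddAbove P := ⟨q0 + (a + b), fun p hp => by
    have := abs_lt.1 (hc p hp q0 hq0); linarith⟩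
  have hPb : BddBelow P := ⟨q0 - (a + b), fun p hp => by
    have := abs_lt.1 (hc p hp q0 hq0); linarith⟩
  have hQa : BddAbove Q := ⟨p0 + (a + b), fun q hq => by
    have := abs_lt.1 (hc p0 hp0 q hq); linarith⟩
  have hQb : BddBelow Q := ⟨p0 - (a + b), fun q hq => by
    have := abs_lt.1 (hc p0 hp0 q hq); linarith⟩
  have h1 : volume P ≤ ENNReal.ofReal (sSup P - sInf P) := by
    rw [← Real.volume_Icc]
    exact measure_mono (subset_Icc_csInf_csSup hPb hPa)
  have h2 : volume Q ≤ ENNReal.ofReal (sSup Q - sInf Q) := by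
    rw [← Real.volume_Icc]
    exact measure_mono (subset_Icc_csInf_csSup hQb hQa)
  have h3 := (ENNReal.ofReal_lt_ofReal_iff_of_nonneg (by positivity)).1 (hP.trans_le h1)
  have h4 := (ENNReal.ofReal_lt_ofReal_iff_of_nonneg (by positivity)).1 (hQ.trans_le h2)
  have h5 : sSup P ≤ sInf Q + (a + b) := by
    apply csSup_le ⟨p0, hp0⟩
    intro p hp
    have : p - (a + b) ≤ sInf Q := by
      apply le_csInf ⟨q0, hq0⟩
      intro q hq
      have := abs_lt.1 (hc p hp q hq); linarith
    linarith
  have h6 : sSup Q ≤ sInf P + (a + b) := by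
    apply csSup_le ⟨q0, hq0⟩
    intro q hq
    have : q - (a + b) ≤ sInf P := by
      apply le_csInf ⟨p0, hp0⟩
      intro p hp
      have := abs_lt.1 (hc p hp q hq); linarith
    linarith
  linarith

lemma steinerSym_diam {n : ℕ} (i : Fin n) (S : Set (Fin n → ℝ)) (R : ℝ)
    (hR : ∀ x ∈ S, ∀ y ∈ S, ∑ j, (x j - y j) ^ 2 ≤ R) :
    ∀ x ∈ steinerSym i S, ∀ y ∈ steinerSym i S, ∑ j, (x j - y j) ^ 2 ≤ R := by
  intro x hx y hy
  obtain ⟨p, hp, q, hq, hpq⟩ := exists_far_pair _ _ _ _ (abs_nonneg (x i)) (abs_nonneg (y i)) hx hy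
  refine le_trans (Finset.sum_le_sum fun j _ => ?_) (hR _ hp _ hq)
  by_cases hj : j = i
  · subst hj
    simp only [Function.update_self]
    rw [← sq_abs, ← sq_abs (p - q)]
    have := abs_sub (x j) (y j)
    have := abs_nonneg (x j - y j)
    exact pow_le_pow_left₀ this (by linarith) 2
  · simp [Function.update_of_ne hj]

lemma steinerSym_symm_self {n : ℕ} (i : Fin n) (S : Set (Fin n → ℝ)) (x : Fin n → ℝ)
    (hx : x ∈ steinerSym i S) : Function.update x i (- x i) ∈ steinerSym i S := by
  simp only [steinerSym, Set.mem_ofPred_eq, sliceLen_update, Function.update_self, abs_neg] at *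
  exact hx

lemma steinerSym_symm_of_ne {n : ℕ} (i j : Fin n) (hij : j ≠ i) (S : Set (Fin n → ℝ))
    (hS : ∀ x ∈ S, Function.update x j (- x j) ∈ S) (x : Fin n → ℝ)
    (hx : x ∈ steinerSym i S) : Function.update x j (- x j) ∈ steinerSym i S := by
  have : ∀ x, sliceLen i S x ≤ sliceLen i S (Function.update x j (- x j)) := by
    intro x
    apply measure_mono
    intro t ht
    have := hS _ ht
    rw [Function.update_of_ne hij, Function.update_comm hij.symm] at this
    exact this
  simp only [steinerSym, Set.mem_ofPred_eq] at *
  rw [Function.update_of_ne hij.symm]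
  exact hx.trans_le (this x)

lemma exists_symmetrized {n : ℕ} (S : Set (Fin n → ℝ)) (hS : MeasurableSet S) (R : ℝ)
    (hR : ∀ x ∈ S, ∀ y ∈ S, ∑ j, (x j - y j) ^ 2 ≤ R) (T : Finset (Fin n)) :
    ∃ S' : Set (Fin n → ℝ), MeasurableSet S' ∧ volume S' = volume S ∧
      (∀ x ∈ S', ∀ y ∈ S', ∑ j, (x j - y j) ^ 2 ≤ R) ∧
      ∀ j ∈ T, ∀ x ∈ S', Function.update x j (- x j) ∈ S' := by
  induction T using Finset.induction_on with
  | empty => exact ⟨S, hS, rfl, hR, by simp⟩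
  | insert i T hi ih =>
    obtain ⟨S', h1, h2, h3, h4⟩ := ih
    refine ⟨steinerSym i S', measurableSet_steinerSym i S' h1, (volume_steinerSym i S' h1).trans h2,
      steinerSym_diam i S' R h3, ?_⟩
    intro j hj x hx
    rcases Finset.mem_insert.1 hj with rfl | hj'
    · exact steinerSym_symm_self _ S' x hx
    · exact steinerSym_symm_of_ne i j (by rintro rfl; exact hi hj') S' (h4 j hj') x hx

lemma neg_mem_of_symm {n : ℕ} (S : Set (Fin n → ℝ))
    (h : ∀ j, ∀ x ∈ S, Function.update x j (- x j) ∈ S) (x : Fin n → ℝ) (hx : x ∈ S) : -x ∈ S := by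
  have key : ∀ T : Finset (Fin n), (fun j => if j ∈ T then - x j else x j) ∈ S := by
    intro T
    induction T using Finset.induction_on with
    | empty => simpa using hx
    | insert i T hi ih =>
      have := h i _ ih
      convert this using 1
      ext j
      by_cases hj : j = i
      · subst hj; simp [hi]
      · simp [hj]
  have := key Finset.univ
  simp only [Finset.mem_univ, if_true] at this
  exact this

lemma isodiametric_pi {n : ℕ} (S : Set (Fin n → ℝ)) (hS : MeasurableSet S) (R : ℝ)
    (hR : ∀ x ∈ S, ∀ y ∈ S, ∑ j, (x j - y j) ^ 2 ≤ R) :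
    volume S ≤ volume {x : Fin n → ℝ | 4 * ∑ j, (x j) ^ 2 ≤ R} := by
  obtain ⟨S', _, h2, h3, h4⟩ := exists_symmetrized S hS R hR Finset.univ
  rw [← h2]
  apply measure_mono
  intro x hx
  have h5 := neg_mem_of_symm S' (fun j => h4 j (Finset.mem_univ _)) x hx
  have := h3 x hx _ h5
  simp only [Set.mem_ofPred_eq]
  refine le_trans (le_of_eq ?_) this
  rw [Finset.mul_sum]
  refine Finset.sum_congr rfl fun j _ => ?_
  simp only [Pi.neg_apply]; ring

lemma isodiametric {n : ℕ} (S : Set (EuclideanSpace ℝ (Fin n))) (hS : MeasurableSet S) (R : ℝ)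
    (hR0 : 0 ≤ R) (hR : ∀ x ∈ S, ∀ y ∈ S, dist x y ≤ R) :
    volume S ≤ volume (Metric.closedBall (0 : EuclideanSpace ℝ (Fin n)) (R / 2)) := by
  have hv := EuclideanSpace.volume_preserving_symm_measurableEquiv_toLp (Fin n)
  have hv' := hv.symm
  simp only [MeasurableEquiv.symm_symm] at hv'
  rw [← hv'.measure_preimage hS.nullMeasurableSet,
    ← hv'.measure_preimage Metric.isClosed_closedBall.measurableSet.nullMeasurableSet]
  refine (isodiametric_pi _ ((MeasurableEquiv.measurable _) hS) (R ^ 2) ?_).trans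
    (measure_mono ?_)
  · intro x hx y hy
    have := hR _ hx _ hy
    rw [EuclideanSpace.dist_eq, Real.sqrt_le_left hR0] at this
    simpa [Real.dist_eq, sq_abs] using this
  · intro x hx
    simp only [Set.mem_ofPred_eq, Set.mem_preimage, mem_closedBall_zero_iff] at *
    rw [EuclideanSpace.norm_eq, Real.sqrt_le_left (by positivity)]
    simp [Real.norm_eq_abs, sq_abs]
    linarith

end Isodiametric

open Measure in
lemma volume_le_normHausdorff (n : ℕ) (hn : 1 ≤ n) :
    (volume : Measure (EuclideanSpace ℝ (Fin n))) ≤ normHausdorff n n := by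
  have : Nonempty (Fin n) := ⟨⟨0, hn⟩⟩
  set c : ENNReal := volume (Metric.ball (0 : EuclideanSpace ℝ (Fin n)) 1) / 2 ^ n with hc
  have hc0 : c ≠ 0 := by
    rw [hc]
    exact (ENNReal.div_pos (Metric.measure_ball_pos _ _ one_pos).ne' (by simp)).ne'
  have hct : c ≠ ⊤ := by
    rw [hc]
    exact (ENNReal.div_lt_top measure_ball_lt_top.ne (by simp)).ne
  have key : c⁻¹ • (volume : Measure (EuclideanSpace ℝ (Fin n))) ≤ μH[(n : ℝ)] := by
    apply le_hausdorffMeasure _ _ 1 one_pos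
    intro s hs
    have hfin : Metric.ediam s ≠ ⊤ := (hs.trans_lt ENNReal.one_lt_top).ne
    have hb : Metric.ediam (closure s) ≠ ⊤ := by rwa [Metric.ediam_closure]
    have h1 : volume s ≤ volume (Metric.closedBall (0 : EuclideanSpace ℝ (Fin n))
        ((Metric.ediam s).toReal / 2)) := by
      refine (measure_mono subset_closure).trans ?_
      apply isodiametric _ isClosed_closure.measurableSet _ ENNReal.toReal_nonneg
      intro x hx y hy
      rw [← ENNReal.ofReal_le_iff_le_toReal hfin, ← edist_dist, ← Metric.ediam_closure]
      exact Metric.edist_le_ediam_of_mem hx hy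
    rw [Measure.addHaar_closedBall _ _ (by positivity)] at h1
    have h2 : ENNReal.ofReal (((Metric.ediam s).toReal / 2) ^ Module.finrank ℝ (EuclideanSpace ℝ (Fin n)))
      * volume (Metric.ball (0 : EuclideanSpace ℝ (Fin n)) 1) = c * Metric.ediam s ^ (n : ℝ) := by
      rw [finrank_euclideanSpace_fin, ENNReal.rpow_natCast, div_pow, ENNReal.ofReal_div_of_pos (by positivity),
        ENNReal.ofReal_pow ENNReal.toReal_nonneg, ENNReal.ofReal_toReal hfin, hc,
        ENNReal.ofReal_pow (by norm_num)]
      simp only [div_eq_mul_inv, ENNReal.ofReal_ofNat]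
      ring
    rw [h2] at h1
    rw [Measure.smul_apply, smul_eq_mul]
    calc c⁻¹ * volume s ≤ c⁻¹ * (c * Metric.ediam s ^ (n : ℝ)) := by gcongr
      _ = _ := by rw [← mul_assoc, ENNReal.inv_mul_cancel hc0 hct, one_mul]
  have : c • c⁻¹ • (volume : Measure (EuclideanSpace ℝ (Fin n))) ≤ c • μH[(n : ℝ)] := by
    intro s
    simp only [Measure.smul_apply, smul_eq_mul]
    gcongr
    exact key s
  rw [smul_smul, ENNReal.mul_inv_cancel hc0 hct, one_smul] at this
  exact this

open Measure in
lemma normHausdorff_le_volume (n : ℕ) (hn : 1 ≤ n) :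
    normHausdorff n n ≤ (volume : Measure (EuclideanSpace ℝ (Fin n))) := by
  have : Nonempty (Fin n) := ⟨⟨0, hn⟩⟩
  set c : ENNReal := volume (Metric.ball (0 : EuclideanSpace ℝ (Fin n)) 1) / 2 ^ n with hc
  have hct : c ≠ ⊤ := by
    rw [hc]
    exact (ENNReal.div_lt_top measure_ball_lt_top.ne (by simp)).ne
  intro s
  have hex : ∀ k : ℕ, ∃ (t : Set (EuclideanSpace ℝ (Fin n))) (r : EuclideanSpace ℝ (Fin n) → ℝ),
      t.Countable ∧ t ⊆ s ∧ (∀ x ∈ t, r x ∈ Set.Ioo (0:ℝ) (1 / (k + 1))) ∧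
      (s ⊆ ⋃ x ∈ t, Metric.closedBall x (r x)) ∧
      (∑' x : t, volume (Metric.closedBall (x : EuclideanSpace ℝ (Fin n)) (r x))) ≤
        volume s + ENNReal.ofReal (1 / (k + 1)) := by
    intro k
    apply Besicovitch.exists_closedBall_covering_tsum_measure_le volume
      (by simp only [ne_eq, ENNReal.ofReal_eq_zero, not_le]; positivity)
      (fun _ => Set.Ioo (0:ℝ) (1 / (k + 1)))
    intro x hx δ hδ
    have hk : (0:ℝ) < 1 / (k + 1) := by positivity
    refine ⟨min δ (1 / (k + 1)) / 2, ?_⟩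
    have h1 : 0 < min δ (1 / ((k:ℝ) + 1)) := lt_min hδ hk
    have h2 := min_le_left δ (1 / ((k:ℝ) + 1))
    have h3 := min_le_right δ (1 / ((k:ℝ) + 1))
    exact ⟨⟨by linarith, by linarith⟩, by linarith, by linarith⟩
  choose t r ht1 ht2 ht3 ht4 ht5 using hex
  have : ∀ k, Countable (t k) := fun k => (ht1 k).to_subtype
  have htend : Tendsto (fun k : ℕ => ENNReal.ofReal (1 / ((k:ℝ) + 1))) atTop (nhds 0) := by
    rw [← ENNReal.ofReal_zero]
    exact ENNReal.tendsto_ofReal tendsto_one_div_add_atTop_nhds_zero_nat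
  have htend2 : Tendsto (fun k : ℕ => 2 * ENNReal.ofReal (1 / ((k:ℝ) + 1))) atTop (nhds 0) := by
    have := ENNReal.Tendsto.const_mul (a := 2) htend (Or.inr (by simp))
    simpa using this
  have hdi : ∀ k, ∀ i : t k, Metric.ediam (Metric.closedBall (i : EuclideanSpace ℝ (Fin n)) (r k i)) ≤
      2 * ENNReal.ofReal (r k i) := by
    intro k i
    rw [← Metric.closedEBall_ofReal (ht3 k i i.2).1.le]
    exact Metric.ediam_closedEBall_le
  have hH := hausdorffMeasure_le_liminf_tsum (n : ℝ) s _ htend2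
    (fun k (i : t k) => Metric.closedBall (i : EuclideanSpace ℝ (Fin n)) (r k i))
    (Eventually.of_forall fun k i => (hdi k i).trans (by
      gcongr; exact (ht3 k i i.2).2.le))
    (Eventually.of_forall fun k => by
      have := ht4 k
      rwa [Set.biUnion_eq_iUnion] at this)
  have hsum : ∀ k, c * ∑' i : t k, Metric.ediam (Metric.closedBall (i : EuclideanSpace ℝ (Fin n)) (r k i)) ^ (n:ℝ)
      ≤ volume s + ENNReal.ofReal (1 / (k + 1)) := by
    intro k
    refine le_trans ?_ (ht5 k)
    rw [← ENNReal.tsum_mul_left]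
    refine ENNReal.tsum_le_tsum fun i => ?_
    rw [Measure.addHaar_closedBall _ _ (ht3 k i i.2).1.le, finrank_euclideanSpace_fin,
      ENNReal.rpow_natCast]
    calc c * _ ≤ c * (2 * ENNReal.ofReal (r k i)) ^ n := by gcongr; exact hdi k i
      _ = _ := by
        rw [mul_pow, hc, ENNReal.ofReal_pow (ht3 k i i.2).1.le, ← mul_assoc,
          ENNReal.div_mul_cancel (by simp) (by simp), mul_comm]
  simp only [normHausdorff, Measure.smul_apply, smul_eq_mul]
  rw [← hc]
  have hlim : Tendsto (fun k : ℕ => volume s + ENNReal.ofReal (1 / ((k:ℝ) + 1))) atTop (nhds (volume s)) := by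
    simpa using tendsto_const_nhds.add htend
  rw [← hlim.liminf_eq]
  calc _ ≤ c * _ := by gcongr
    _ ≤ liminf (fun k => c * ∑' i : t k, Metric.ediam (Metric.closedBall (i : EuclideanSpace ℝ (Fin n)) (r k i)) ^ (n:ℝ)) atTop := by
      rw [ENNReal.liminf_const_mul_of_ne_top hct]; gcongr
    _ ≤ _ := by
      exact liminf_le_liminf (Eventually.of_forall hsum)

lemma normHausdorff_self (n : ℕ) (hn : 1 ≤ n) :
    normHausdorff n n = (volume : Measure (EuclideanSpace ℝ (Fin n))) :=
  le_antisymm (normHausdorff_le_volume n hn) (volume_le_normHausdorff n hn)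

/-! ### Basic properties of packing bound functions -/

namespace PackingBoundFunction

variable (A : PackingBoundFunction)

lemma mono' {d : ℕ} {C C' : Set (EuclideanSpace ℝ (Fin d))} (h : C ⊆ C')
    (hC : MeasurableSet C) (hb' : IsBounded C') (hC' : MeasurableSet C') :
    A.toFun d C ≤ A.toFun d C' :=
  A.lipschitz d d C C' (hb'.subset h) hC hb' hC' ⟨id, fun _ hx => h hx, fun _ _ _ _ => le_rfl⟩

lemma empty' (d : ℕ) : A.toFun d ∅ = 0 := by
  have := A.union d ∅ ∅ isBounded_empty MeasurableSet.empty isBounded_empty MeasurableSet.empty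
    (by simp)
  simp at this
  exact this

/-- Embedding `x ↦ (t, x)`. -/
noncomputable def consEmb {d : ℕ} (t : ℝ) (x : EuclideanSpace ℝ (Fin d)) :
    EuclideanSpace ℝ (Fin (d + 1)) := WithLp.toLp 2 (Fin.cons t x.ofLp)

lemma dist_consEmb {d : ℕ} (s t : ℝ) (x y : EuclideanSpace ℝ (Fin d)) :
    dist (consEmb s x) (consEmb t y) = Real.sqrt ((s - t) ^ 2 + dist x y ^ 2) := by
  rw [EuclideanSpace.dist_eq, EuclideanSpace.dist_eq, Fin.sum_univ_succ,
    Real.sq_sqrt (by positivity)]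
  simp [consEmb, Real.dist_eq, sq_abs]

lemma isometry_consEmb {d : ℕ} (t : ℝ) : Isometry (consEmb (d := d) t) := by
  refine Isometry.of_dist_eq fun x y => ?_
  rw [dist_consEmb]
  simp [Real.sqrt_sq dist_nonneg]

lemma consEmb_image {d : ℕ} (t : ℝ) {C : Set (EuclideanSpace ℝ (Fin d))}
    (hb : IsBounded C) (hC : MeasurableSet C) :
    IsBounded (consEmb t '' C) ∧ MeasurableSet (consEmb t '' C) ∧
      A.toFun (d + 1) (consEmb t '' C) ≤ A.toFun d C := by
  have h1 : IsBounded (consEmb t '' C) := (isometry_consEmb t).lipschitz.isBounded_image hb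
  have h2 : MeasurableSet (consEmb t '' C) :=
    (isometry_consEmb t).isClosedEmbedding.measurableEmbedding.measurableSet_image.2 hC
  refine ⟨h1, h2, A.lipschitz _ _ _ _ h1 h2 hb hC ⟨Function.invFun (consEmb t), ?_, ?_⟩⟩
  · rintro _ ⟨x, hx, rfl⟩
    rwa [Function.leftInverse_invFun (isometry_consEmb t).injective]
  · rintro _ ⟨x, hx, rfl⟩ _ ⟨y, hy, rfl⟩
    rw [Function.leftInverse_invFun (isometry_consEmb t).injective,
      Function.leftInverse_invFun (isometry_consEmb t).injective, (isometry_consEmb t).dist_eq]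

lemma subadd {d : ℕ} {C C' : Set (EuclideanSpace ℝ (Fin d))}
    (hb : IsBounded C) (hC : MeasurableSet C) (hb' : IsBounded C') (hC' : MeasurableSet C') :
    A.toFun d (C ∪ C') ≤ A.toFun d C + A.toFun d C' := by
  classical
  obtain ⟨h1, h2, h3⟩ := A.consEmb_image 0 hb hC
  obtain ⟨h4, h5, h6⟩ := A.consEmb_image 2 hb' hC'
  have h7 := A.union (d + 1) _ _ h1 h2 h4 h5 (by
    rintro _ ⟨x, hx, rfl⟩ _ ⟨y, hy, rfl⟩
    rw [dist_consEmb]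
    apply Real.le_sqrt_of_sq_le
    nlinarith [sq_nonneg (dist x y)])
  refine le_trans ?_ (h7.le.trans (add_le_add h3 h6))
  refine A.lipschitz _ _ _ _ (hb.union hb') (hC.union hC') (h1.union h4) (h2.union h5)
    ⟨fun x => if x ∈ C then consEmb 0 x else consEmb 2 x, ?_, ?_⟩
  · intro x hx
    by_cases hxC : x ∈ C
    · left; simp only [hxC, if_true]; exact ⟨x, hxC, rfl⟩
    · right; simp only [hxC, if_false]; exact ⟨x, hx.resolve_left hxC, rfl⟩
  · intro x _ y _
    have key : ∀ s t : ℝ, dist x y ≤ dist (consEmb s x) (consEmb t y) := by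
      intro s t
      rw [dist_consEmb]
      apply Real.le_sqrt_of_sq_le
      nlinarith [sq_nonneg (s - t)]
    dsimp only
    split_ifs <;> exact key _ _

lemma subadd_finset {d : ℕ} {ι : Type*} (T : Finset ι) (C : ι → Set (EuclideanSpace ℝ (Fin d)))
    (hb : ∀ i ∈ T, IsBounded (C i)) (hC : ∀ i ∈ T, MeasurableSet (C i)) :
    A.toFun d (⋃ i ∈ T, C i) ≤ ∑ i ∈ T, A.toFun d (C i) := by
  classical
  induction T using Finset.induction_on with
  | empty => simp [A.empty']
  | insert i T hi ih =>
    rw [Finset.set_biUnion_insert, Finset.sum_insert hi]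
    have hb2 : ∀ j ∈ T, IsBounded (C j) := fun j hj => hb j (Finset.mem_insert_of_mem hj)
    have hC2 : ∀ j ∈ T, MeasurableSet (C j) := fun j hj => hC j (Finset.mem_insert_of_mem hj)
    refine (A.subadd (hb i (Finset.mem_insert_self _ _)) (hC i (Finset.mem_insert_self _ _))
      ((isBounded_biUnion_finset T).2 hb2) (Finset.measurableSet_biUnion T hC2)).trans ?_
    gcongr
    exact ih hb2 hC2

lemma add_finset {d : ℕ} {ι : Type*} (T : Finset ι) (C : ι → Set (EuclideanSpace ℝ (Fin d)))
    (hb : ∀ i ∈ T, IsBounded (C i)) (hC : ∀ i ∈ T, MeasurableSet (C i))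
    (hs : ∀ i ∈ T, ∀ j ∈ T, i ≠ j → ∀ x ∈ C i, ∀ y ∈ C j, 2 ≤ dist x y) :
    A.toFun d (⋃ i ∈ T, C i) = ∑ i ∈ T, A.toFun d (C i) := by
  classical
  induction T using Finset.induction_on with
  | empty => simp [A.empty']
  | insert i T hi ih =>
    rw [Finset.set_biUnion_insert, Finset.sum_insert hi]
    have hb2 : ∀ j ∈ T, IsBounded (C j) := fun j hj => hb j (Finset.mem_insert_of_mem hj)
    have hC2 : ∀ j ∈ T, MeasurableSet (C j) := fun j hj => hC j (Finset.mem_insert_of_mem hj)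
    rw [A.union _ _ _ (hb i (Finset.mem_insert_self _ _)) (hC i (Finset.mem_insert_self _ _))
      ((isBounded_biUnion_finset T).2 hb2) (Finset.measurableSet_biUnion T hC2),
      ih hb2 hC2 fun j hj k hk => hs j (Finset.mem_insert_of_mem hj) k (Finset.mem_insert_of_mem hk)]
    intro x hx y hy
    simp only [Set.mem_iUnion] at hy
    obtain ⟨j, hj, hy⟩ := hy
    exact hs i (Finset.mem_insert_self _ _) j (Finset.mem_insert_of_mem hj)
      (by rintro rfl; exact hi hj) x hx y hy

lemma le_one {d : ℕ} {C : Set (EuclideanSpace ℝ (Fin d))} (hC : MeasurableSet C)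
    (z : EuclideanSpace ℝ (Fin d)) (h : C ⊆ Metric.ball z 1) : A.toFun d C ≤ 1 := by
  rcases C.eq_empty_or_nonempty with rfl | hne
  · rw [A.empty']; norm_num
  · exact (A.sphere_bound d C (Metric.isBounded_ball.subset h) hC hne ⟨z, h⟩).le

lemma le_card {d : ℕ} {ι : Type*} {C : Set (EuclideanSpace ℝ (Fin d))} (hC : MeasurableSet C)
    (T : Finset ι) (z : ι → EuclideanSpace ℝ (Fin d)) (h : C ⊆ ⋃ i ∈ T, Metric.ball (z i) 1) :
    A.toFun d C ≤ T.card := by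
  have hb : ∀ i ∈ T, IsBounded (Metric.ball (z i) 1) := fun _ _ => Metric.isBounded_ball
  have hm : ∀ i ∈ T, MeasurableSet (Metric.ball (z i) 1) := fun _ _ => measurableSet_ball
  refine (A.mono' h hC ((isBounded_biUnion_finset T).2 hb) (Finset.measurableSet_biUnion T hm)).trans
    ((A.subadd_finset T _ hb hm).trans ?_)
  refine (Finset.sum_le_card_nsmul T _ 1 fun i hi => A.le_one (hm i hi) (z i) subset_rfl).trans ?_
  simp

end PackingBoundFunction

/-- Axis-parallel closed cube. -/
def cubeAt {n : ℕ} (v : EuclideanSpace ℝ (Fin n)) (s : ℝ) : Set (EuclideanSpace ℝ (Fin n)) :=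
  {x | ∀ i, x i ∈ Set.Icc (v i) (v i + s)}

lemma isCompact_cubeAt {n : ℕ} (v : EuclideanSpace ℝ (Fin n)) (s : ℝ) : IsCompact (cubeAt v s) := by
  have h : cubeAt v s = (WithLp.toLp 2) '' (Set.pi Set.univ fun i => Set.Icc (v i) (v i + s)) := by
    ext x
    constructor
    · intro hx
      exact ⟨x.ofLp, fun i _ => hx i, rfl⟩
    · rintro ⟨y, hy, rfl⟩ i
      exact hy i trivial
  rw [h]
  exact (isCompact_univ_pi fun i => isCompact_Icc).image (PiLp.continuous_toLp 2 _)

lemma volume_box {n : ℕ} (I : Fin n → Set ℝ) (hI : ∀ i, MeasurableSet (I i)) :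
    volume {x : EuclideanSpace ℝ (Fin n) | ∀ i, x i ∈ I i} = ∏ i, volume (I i) := by
  have hv := EuclideanSpace.volume_preserving_symm_measurableEquiv_toLp (Fin n)
  rw [← volume_pi_pi, ← hv.measure_preimage
    (MeasurableSet.univ_pi hI).nullMeasurableSet]
  congr 1
  ext x
  simp [Set.mem_pi]

lemma volume_cubeAt {n : ℕ} (v : EuclideanSpace ℝ (Fin n)) {s : ℝ} (hs : 0 ≤ s) :
    (volume (cubeAt v s)).toReal = s ^ n := by
  rw [cubeAt, volume_box _ fun i => measurableSet_Icc]
  simp [hs]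

lemma smul_unitCube {n : ℕ} {s : ℝ} (hs : 0 < s) : s • unitCube n = cubeAt 0 s := by
  ext x
  rw [Set.mem_smul_set_iff_inv_smul_mem₀ hs.ne']
  simp only [unitCube, cubeAt, Set.mem_ofPred_eq, PiLp.smul_apply, smul_eq_mul, Set.mem_Icc,
    PiLp.zero_apply, zero_add]
  refine forall_congr' fun i => ?_
  rw [inv_mul_le_iff₀ hs, mul_one]
  refine and_congr_left fun _ => ?_
  constructor
  · intro h
    by_contra! hneg
    exact absurd h (not_le.2 (mul_neg_of_pos_of_neg (inv_pos.2 hs) hneg))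
  · intro h; positivity

lemma isCompact_unitCube (n : ℕ) : IsCompact (unitCube n) := by
  have := smul_unitCube (n := n) one_pos
  rw [one_smul] at this
  rw [this]; exact isCompact_cubeAt _ _

lemma smul_cubeAt {n : ℕ} (v : EuclideanSpace ℝ (Fin n)) {r s : ℝ} (hr : 0 < r) :
    r • cubeAt v s = cubeAt (r • v) (r * s) := by
  ext x
  rw [Set.mem_smul_set_iff_inv_smul_mem₀ hr.ne']
  simp only [cubeAt, Set.mem_ofPred_eq, PiLp.smul_apply, smul_eq_mul, Set.mem_Icc]
  refine forall_congr' fun i => ?_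
  rw [inv_mul_le_iff₀ hr, le_inv_mul_iff₀ hr, mul_add]

lemma cubeAt_le {n : ℕ} (A : PackingBoundFunction) (v w : EuclideanSpace ℝ (Fin n)) (s : ℝ) :
    A.toFun n (cubeAt v s) ≤ A.toFun n (cubeAt w s) := by
  refine A.lipschitz _ _ _ _ (isCompact_cubeAt _ _).isBounded (isCompact_cubeAt _ _).measurableSet
    (isCompact_cubeAt _ _).isBounded (isCompact_cubeAt _ _).measurableSet ⟨fun x => x - v + w, ?_, ?_⟩
  · intro x hx i
    have := hx i
    simp only [PiLp.add_apply, PiLp.sub_apply, Set.mem_Icc] at *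
    constructor <;> linarith
  · intro x _ y _
    simp

/-- Infimum of normalized cube values. -/
noncomputable def cubeInf (A : PackingBoundFunction) (n : ℕ) : ℝ :=
  sInf ((fun s : ℝ => A.toFun n (s • unitCube n) / s ^ n) '' Set.Ioi 0)

lemma cube_nonneg (A : PackingBoundFunction) (n : ℕ) {s : ℝ} (hs : 0 < s) :
    0 ≤ A.toFun n (s • unitCube n) := by
  rw [smul_unitCube hs]
  exact A.nonneg _ _ (isCompact_cubeAt _ _).isBounded (isCompact_cubeAt _ _).measurableSet

lemma cubeInf_bddBelow (A : PackingBoundFunction) (n : ℕ) :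
    BddBelow ((fun s : ℝ => A.toFun n (s • unitCube n) / s ^ n) '' Set.Ioi 0) := by
  refine ⟨0, ?_⟩
  rintro _ ⟨s, hs, rfl⟩
  have hs' : 0 < s := hs
  have := cube_nonneg A n hs'
  dsimp only
  positivity

lemma cubeInf_nonneg (A : PackingBoundFunction) (n : ℕ) : 0 ≤ cubeInf A n := by
  apply Real.sInf_nonneg
  rintro _ ⟨s, hs, rfl⟩
  have hs' : 0 < s := hs
  have := cube_nonneg A n hs'
  dsimp only
  positivity

lemma cubeInf_le (A : PackingBoundFunction) (n : ℕ) {s : ℝ} (hs : 0 < s) :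
    cubeInf A n * s ^ n ≤ A.toFun n (s • unitCube n) := by
  have : cubeInf A n ≤ A.toFun n (s • unitCube n) / s ^ n :=
    csInf_le (cubeInf_bddBelow A n) ⟨s, hs, rfl⟩
  rwa [le_div_iff₀ (by positivity)] at this

/-- Counting grid cubes meeting a compact set. -/
lemma grid_count {n : ℕ} (F : Set (EuclideanSpace ℝ (Fin n))) (hF : IsCompact F) {h : ℝ}
    (hh : 0 < h) : ∃ T : Finset (Fin n → ℤ),
      (F ⊆ ⋃ k ∈ T, cubeAt (WithLp.toLp 2 fun i => h * (k i : ℝ)) h) ∧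
      (T.card : ℝ) * h ^ n ≤ (volume (Metric.cthickening (n * h) F)).toReal := by
  classical
  let fl : EuclideanSpace ℝ (Fin n) → (Fin n → ℤ) := fun x i => ⌊x i / h⌋
  have hfin : (fl '' F).Finite := by
    obtain ⟨R, hR⟩ := hF.isBounded.exists_norm_le
    refine (Set.finite_Icc (fun _ : Fin n => ⌊-R / h⌋) (fun _ => ⌊R / h⌋)).subset ?_
    rintro _ ⟨x, hx, rfl⟩
    have hxi : ∀ i, |x i| ≤ R := fun i => (PiLp.norm_apply_le x i).trans (hR x hx)
    refine ⟨fun i => ?_, fun i => ?_⟩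
    · exact Int.floor_le_floor (div_le_div_of_nonneg_right (abs_le.1 (hxi i)).1 hh.le)
    · exact Int.floor_le_floor (div_le_div_of_nonneg_right (abs_le.1 (hxi i)).2 hh.le)
  have hflo : ∀ (x : EuclideanSpace ℝ (Fin n)) i, h * (fl x i : ℝ) ≤ x i ∧ x i < h * (fl x i : ℝ) + h := by
    intro x i
    have h1 := Int.floor_le (x i / h)
    have h2 := Int.lt_floor_add_one (x i / h)
    rw [le_div_iff₀ hh] at h1
    rw [div_lt_iff₀ hh] at h2
    constructor
    · simp only [fl]; linarith
    · simp only [fl]; linarith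
  refine ⟨hfin.toFinset, ?_, ?_⟩
  · intro x hx
    simp only [Set.mem_iUnion]
    refine ⟨fl x, by simpa using ⟨x, hx, rfl⟩, fun i => ⟨(hflo x i).1, (hflo x i).2.le⟩⟩
  · let B : (Fin n → ℤ) → Set (EuclideanSpace ℝ (Fin n)) := fun k =>
      {x | ∀ i, x i ∈ Set.Ico (h * (k i : ℝ)) (h * (k i : ℝ) + h)}
    have hBfl : ∀ k, ∀ x ∈ B k, fl x = k := by
      intro k x hx
      ext i
      have := hx i
      simp only [fl]
      rw [Int.floor_eq_iff, le_div_iff₀ hh, div_lt_iff₀ hh]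
      simp only [Set.mem_Ico] at this
      constructor <;> nlinarith
    have hBm : ∀ k, MeasurableSet (B k) := by
      intro k
      have : B k = ⋂ i, {x : EuclideanSpace ℝ (Fin n) | x i ∈ Set.Ico (h * (k i : ℝ)) (h * (k i : ℝ) + h)} := by
        ext x; simp [B]
      rw [this]
      refine MeasurableSet.iInter fun i => ?_
      exact (by fun_prop : Measurable fun x : EuclideanSpace ℝ (Fin n) => x i) measurableSet_Ico
    have hBv : ∀ k, volume (B k) = ENNReal.ofReal (h ^ n) := by
      intro k
      rw [volume_box _ fun i => measurableSet_Ico]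
      simp [ENNReal.ofReal_pow hh.le]
    have hsub : (⋃ k ∈ hfin.toFinset, B k) ⊆ Metric.cthickening (n * h) F := by
      intro y hy
      simp only [Set.mem_iUnion] at hy
      obtain ⟨k, hk, hy⟩ := hy
      rw [Set.Finite.mem_toFinset] at hk
      obtain ⟨x, hx, rfl⟩ := hk
      apply Metric.mem_cthickening_of_dist_le y x _ _ hx
      rw [EuclideanSpace.dist_eq]
      apply Real.sqrt_le_iff.2 ⟨by positivity, ?_⟩
      have : ∀ i, dist (y i) (x i) ^ 2 ≤ h ^ 2 := by
        intro i
        have h1 := hflo x i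
        have h2 := hy i
        simp only [Set.mem_Ico] at h2
        rw [Real.dist_eq]
        apply pow_le_pow_left₀ (abs_nonneg _)
        rw [abs_le]
        constructor <;> linarith
      refine (Finset.sum_le_card_nsmul _ _ _ fun i _ => this i).trans ?_
      simp only [Finset.card_univ, Fintype.card_fin, nsmul_eq_mul]
      rw [mul_pow]
      gcongr
      rcases Nat.eq_zero_or_pos n with h0 | h0
      · subst h0; simp
      · have : (1:ℝ) ≤ n := by exact_mod_cast h0
        nlinarith
    have hfinite : volume (Metric.cthickening (n * h) F) ≠ ⊤ :=
      (hF.cthickening.measure_lt_top).ne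
    have hsum := measure_mono (μ := volume) hsub
    rw [measure_biUnion_finset] at hsum
    · simp only [hBv, Finset.sum_const, nsmul_eq_mul] at hsum
      have := ENNReal.toReal_mono hfinite hsum
      rw [ENNReal.toReal_mul, ENNReal.toReal_ofReal (by positivity)] at this
      simpa using this
    · intro k _ l _ hkl
      rw [Function.onFun, Set.disjoint_left]
      intro x hx hx'
      exact hkl ((hBfl k x hx).symm.trans (hBfl l x hx'))
    · intro k _; exact hBm k

lemma isCompact_smul_set {d : ℕ} {C : Set (EuclideanSpace ℝ (Fin d))} (hC : IsCompact C) (r : ℝ) :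
    IsCompact (r • C) := hC.smul r

lemma ub_compact {n : ℕ} (A : PackingBoundFunction) (F : Set (EuclideanSpace ℝ (Fin n)))
    (hF : IsCompact F) (c : ℝ) (hc : cubeInf A n * (volume F).toReal < c) :
    ∀ᶠ r : ℝ in atTop, A.toFun n (r • F) ≤ c * r ^ n := by
  have hne : ((fun s : ℝ => A.toFun n (s • unitCube n) / s ^ n) '' Set.Ioi 0).Nonempty :=
    ⟨_, 1, by simp, rfl⟩
  -- choose s
  obtain ⟨s, hs, hsc⟩ : ∃ s : ℝ, 0 < s ∧ A.toFun n (s • unitCube n) / s ^ n * (volume F).toReal < c := by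
    have hcont : Tendsto (fun q : ℝ => (cubeInf A n + q) * (volume F).toReal) (nhdsWithin 0 (Set.Ioi 0))
        (nhds ((cubeInf A n + 0) * (volume F).toReal)) := by
      apply tendsto_nhdsWithin_of_tendsto_nhds
      exact Continuous.tendsto (by fun_prop) _
    rw [add_zero] at hcont
    obtain ⟨q, hq, hq0⟩ := ((hcont.eventually_lt_const hc).and self_mem_nhdsWithin).exists
    have hq0' : (0:ℝ) < q := hq0
    obtain ⟨_, ⟨s, hs, rfl⟩, hlt⟩ := exists_lt_of_csInf_lt hne
      (show sInf _ < cubeInf A n + q from by rw [← cubeInf]; linarith)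
    refine ⟨s, hs, lt_of_le_of_lt ?_ hq⟩
    gcongr
  set α := A.toFun n (s • unitCube n) / s ^ n with hα
  have hα0 : 0 ≤ α := by
    have := cube_nonneg A n hs
    positivity
  have ht1 : Tendsto (fun r : ℝ => (n : ℝ) * (s / r)) atTop (nhds 0) := by
    have := (tendsto_const_nhds (x := s)).div_atTop (tendsto_id (α := ℝ))
    simpa using this.const_mul (n : ℝ)
  have ht2 := (tendsto_measure_cthickening_of_isCompact (μ := volume) hF).comp ht1
  have ht3 : Tendsto (fun r : ℝ => α * (volume (Metric.cthickening (n * (s / r)) F)).toReal) atTop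
      (nhds (α * (volume F).toReal)) :=
    ((ENNReal.tendsto_toReal hF.measure_lt_top.ne).comp ht2).const_mul α
  filter_upwards [ht3.eventually_lt_const hsc, eventually_gt_atTop 0] with r hr hr0
  obtain ⟨T, hT1, hT2⟩ := grid_count F hF (h := s / r) (by positivity)
  set cc : (Fin n → ℤ) → Set (EuclideanSpace ℝ (Fin n)) := fun k =>
    cubeAt (r • WithLp.toLp 2 fun i => (s / r) * (k i : ℝ)) s with hcc
  have hsub : r • F ⊆ ⋃ k ∈ T, cc k := by
    rintro _ ⟨x, hx, rfl⟩
    have := hT1 hx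
    simp only [Set.mem_iUnion] at this ⊢
    obtain ⟨k, hk, hxk⟩ := this
    refine ⟨k, hk, ?_⟩
    have h1 := Set.smul_mem_smul_set (a := r) hxk
    rw [smul_cubeAt _ hr0] at h1
    rw [mul_div_cancel₀ s hr0.ne'] at h1
    exact h1
  have hb : ∀ k ∈ T, IsBounded (cc k) := fun k _ => (isCompact_cubeAt _ _).isBounded
  have hm : ∀ k ∈ T, MeasurableSet (cc k) := fun k _ => (isCompact_cubeAt _ _).measurableSet
  calc A.toFun n (r • F) ≤ A.toFun n (⋃ k ∈ T, cc k) :=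
        A.mono' hsub (isCompact_smul_set hF r).measurableSet ((isBounded_biUnion_finset T).2 hb)
          (Finset.measurableSet_biUnion T hm)
    _ ≤ ∑ k ∈ T, A.toFun n (cc k) := A.subadd_finset T cc hb hm
    _ ≤ T.card • A.toFun n (s • unitCube n) := by
      apply Finset.sum_le_card_nsmul
      intro k _
      rw [smul_unitCube hs]
      exact cubeAt_le A _ _ _
    _ = α * (T.card * (s / r) ^ n) * r ^ n := by
      rw [nsmul_eq_mul, hα, div_pow]
      field_simp
    _ ≤ α * (volume (Metric.cthickening (n * (s / r)) F)).toReal * r ^ n := by gcongr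
    _ ≤ c * r ^ n := by gcongr

lemma tendsto_cube (A : PackingBoundFunction) (n : ℕ) :
    Tendsto (fun r : ℝ => A.toFun n (r • unitCube n) / r ^ n) atTop (nhds (cubeInf A n)) := by
  have hv : (volume (unitCube n)).toReal = 1 := by
    have := smul_unitCube (n := n) one_pos
    rw [one_smul] at this
    rw [this, volume_cubeAt _ zero_le_one, one_pow]
  rw [tendsto_order]
  constructor
  · intro c hc
    filter_upwards [eventually_gt_atTop 0] with r hr
    apply hc.trans_le
    rw [le_div_iff₀ (by positivity)]
    exact cubeInf_le A n hr
  · intro c hc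
    obtain ⟨c', h1, h2⟩ := exists_between hc
    filter_upwards [ub_compact A (unitCube n) (isCompact_unitCube n) c' (by rw [hv]; linarith),
      eventually_gt_atTop 0] with r hr hr0
    apply lt_of_le_of_lt _ h2
    rwa [div_le_iff₀ (by positivity)]

lemma pbfDensity_eq (A : PackingBoundFunction) (n : ℕ) : pbfDensity A n = cubeInf A n := by
  have h := (tendsto_cube A n).comp (tendsto_pow_atTop_atTop_of_one_lt (one_lt_two (α := ℝ)))
  have : Tendsto (fun k : ℕ => A.toFun n ((2 : ℝ) ^ k • unitCube n) / 2 ^ (k * n)) atTop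
      (nhds (cubeInf A n)) := by
    convert h using 2 with k
    simp [pow_mul]
  exact this.limsup_eq

/-! ### The remainder lemma and lower bounds for compact sets -/

lemma exists_separated_cover {n : ℕ} {X : Set (EuclideanSpace ℝ (Fin n))} (hX : IsCompact X)
    {ρ : ℝ} (hρ : 0 < ρ) : ∃ T : Finset (EuclideanSpace ℝ (Fin n)), (∀ x ∈ T, x ∈ X) ∧
      (∀ x ∈ T, ∀ y ∈ T, x ≠ y → ρ < dist x y) ∧ ∀ x ∈ X, ∃ y ∈ T, dist x y ≤ ρ := by
  set q : NNReal := (ρ / 2).toNNReal with hq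
  have hq0 : q ≠ 0 := by
    rw [hq]; simp; positivity
  have h2q : ((2 * q : NNReal) : ℝ) = ρ := by
    rw [hq]; push_cast; rw [Real.coe_toNNReal _ (by positivity)]; ring
  have hfin : Metric.packingNumber (2 * q) X ≠ ⊤ := by
    obtain ⟨N, _, hN2, hN3⟩ := Metric.exists_finite_isCover_of_isCompact hq0 hX
    have h1 := Metric.packingNumber_two_mul_le_externalCoveringNumber q X
    have h2 := hN3.externalCoveringNumber_le_encard
    exact ((h1.trans h2).trans_lt hN2.encard_lt_top).ne
  obtain hcov := Metric.isCover_maximalSeparatedSet hfin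
  have hTfin : (Metric.maximalSeparatedSet (2 * q) X).Finite := by
    rw [← Set.encard_ne_top_iff, Metric.encard_maximalSeparatedSet hfin]; exact hfin
  refine ⟨hTfin.toFinset, ?_, ?_, ?_⟩
  · intro x hx
    exact Metric.maximalSeparatedSet_subset (by simpa using hx)
  · intro x hx y hy hxy
    have := Metric.isSeparated_maximalSeparatedSet (ε := 2 * q) (A := X) (by simpa using hx)
      (by simpa using hy) hxy
    dsimp only at this
    rw [edist_dist, ← ENNReal.ofReal_coe_nnreal, ENNReal.ofReal_lt_ofReal_iff_of_nonneg (by positivity),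
      h2q] at this
    exact this
  · intro x hx
    have := hcov.subset_iUnion_closedBall hx
    simp only [Set.mem_iUnion] at this
    obtain ⟨y, hy, hxy⟩ := this
    refine ⟨y, by simpa using hy, ?_⟩
    rw [Metric.mem_closedBall, h2q] at hxy
    exact hxy

/-- Constant of the remainder lemma. -/
noncomputable def remConst (n : ℕ) (K ε : ℝ) : ℝ :=
  (2 * K * (1 + ε) / ε) ^ n / (volume (Metric.ball (0 : EuclideanSpace ℝ (Fin n)) 1)).toReal

lemma unitBall_pos (n : ℕ) :
    0 < (volume (Metric.ball (0 : EuclideanSpace ℝ (Fin n)) 1)).toReal :=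
  ENNReal.toReal_pos (Metric.measure_ball_pos _ _ one_pos).ne' measure_ball_lt_top.ne

lemma remConst_nonneg (n : ℕ) {K ε : ℝ} (hK : 0 < K) (hε : 0 < ε) : 0 ≤ remConst n K ε := by
  have := unitBall_pos n
  unfold remConst
  positivity

lemma remainder {n d : ℕ} (A : PackingBoundFunction)
    (f : EuclideanSpace ℝ (Fin n) → EuclideanSpace ℝ (Fin d)) {K : ℝ} (hK : 0 < K)
    (hf : ∀ x y, dist (f x) (f y) ≤ K * dist x y)
    {S : Set (EuclideanSpace ℝ (Fin n))} (hS : IsCompact S)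
    {C' : Set (EuclideanSpace ℝ (Fin d))} (hC' : IsCompact C')
    {ε : ℝ} (hε : 0 < ε) {w : ℝ} (hw : (volume (S \ f ⁻¹' C')).toReal < w) :
    ∀ᶠ r : ℝ in atTop, A.toFun d (r • (f '' S)) ≤
      A.toFun d (((1 + ε) * r) • C') + w * remConst n K ε * r ^ n := by
  have hcont : Continuous f :=
    (LipschitzWith.of_dist_le_mul (K := K.toNNReal) (f := f) (by
      intro x y; rw [Real.coe_toNNReal _ hK.le]; exact hf x y)).continuous
  set ε' : ℝ := ε / (1 + ε) with hε'
  have hε'0 : 0 < ε' := by positivity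
  have hε'1 : ε' < 1 := by rw [hε', div_lt_one (by positivity)]; linarith
  set vB := (volume (Metric.ball (0 : EuclideanSpace ℝ (Fin n)) 1)).toReal with hvB
  have hvB0 : 0 < vB := unitBall_pos n
  have ht1 : Tendsto (fun r : ℝ => ε' / (K * r) / 2) atTop (nhds 0) := by
    have h1 : Tendsto (fun r : ℝ => K * r) atTop atTop := tendsto_id.const_mul_atTop hK
    simpa using ((tendsto_const_nhds (x := ε')).div_atTop h1).div_const 2
  have ht2 := (ENNReal.tendsto_toReal hS.measure_lt_top.ne).comp
    ((tendsto_measure_cthickening_of_isCompact (μ := volume) hS).comp ht1)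
  have hw' : (volume S).toReal < (volume S).toReal + (w - (volume (S \ f ⁻¹' C')).toReal) := by linarith
  filter_upwards [ht2.eventually_lt_const hw', eventually_gt_atTop 0] with r hr hr0
  simp only [Function.comp_apply] at hr
  set ρ : ℝ := ε' / (K * r) with hρ
  have hρ0 : 0 < ρ := by positivity
  have hKρ : K * ρ = ε' / r := by rw [hρ]; field_simp
  have hSc : IsCompact (f '' S) := hS.image hcont
  set P := f '' S ∩ Metric.thickening (ε' / r) C' with hP
  set Q := f '' S \ Metric.thickening (ε' / r) C' with hQ
  have hPb : IsBounded P := hSc.isBounded.subset Set.inter_subset_left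
  have hPm : MeasurableSet P := hSc.measurableSet.inter Metric.isOpen_thickening.measurableSet
  have hQc : IsCompact Q := hSc.diff Metric.isOpen_thickening
  have hPQ : r • (f '' S) = r • P ∪ r • Q := by
    rw [← Set.smul_set_union, hP, hQ, Set.inter_union_diff]
  have hrP : A.toFun d (r • P) ≤ A.toFun d (((1 + ε) * r) • C') := by
    have h1 := A.mesh ε hε d (((1 + ε) * r) • P) (((1 + ε) * r) • C') (hPb.smul₀ _)
      (hPm.const_smul₀ _) (hC'.smul _).isBounded (hC'.smul _).measurableSet (by
        rintro _ ⟨x, hx, rfl⟩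
        obtain ⟨c, hc, hxc⟩ := Metric.mem_thickening_iff.1 hx.2
        refine Metric.mem_thickening_iff.2 ⟨((1 + ε) * r) • c, Set.smul_mem_smul_set hc, ?_⟩
        simp only
        rw [dist_smul₀, Real.norm_of_nonneg (by positivity)]
        calc (1 + ε) * r * dist x c < (1 + ε) * r * (ε' / r) := by gcongr
          _ = ε := by rw [hε']; field_simp)
    rwa [smul_smul, show 1 / (1 + ε) * ((1 + ε) * r) = r by field_simp] at h1
  have hrQ : A.toFun d (r • Q) ≤ w * remConst n K ε * r ^ n := by
    set X := S ∩ f ⁻¹' Q with hX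
    have hXc : IsCompact X := hS.inter_right (hQc.isClosed.preimage hcont)
    obtain ⟨T, hT1, hT2, hT3⟩ := exists_separated_cover hXc hρ0
    have hcard : A.toFun d (r • Q) ≤ T.card := by
      apply A.le_card (hQc.smul r).measurableSet T fun x => r • f x
      rintro _ ⟨_, hy, rfl⟩
      obtain ⟨x, hx, rfl⟩ := hy.1
      obtain ⟨z, hz, hxz⟩ := hT3 x ⟨hx, hy⟩
      simp only [Set.mem_iUnion]
      refine ⟨z, hz, ?_⟩
      rw [Metric.mem_ball, dist_smul₀, Real.norm_of_nonneg hr0.le]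
      calc r * dist (f x) (f z) ≤ r * (K * ρ) := by
            gcongr; exact (hf x z).trans (by gcongr)
        _ = ε' := by rw [hKρ]; field_simp
        _ < 1 := hε'1
    refine hcard.trans ?_
    -- volume count
    have hsub : (⋃ x ∈ T, Metric.ball x (ρ / 2)) ⊆ Metric.cthickening (ρ / 2) S \ f ⁻¹' C' := by
      intro y hy
      simp only [Set.mem_iUnion] at hy
      obtain ⟨x, hx, hy⟩ := hy
      have hxX := hT1 x hx
      rw [Metric.mem_ball] at hy
      refine ⟨Metric.mem_cthickening_of_dist_le y x _ _ hxX.1 hy.le, fun hyC => ?_⟩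
      apply hxX.2.2
      refine Metric.mem_thickening_iff.2 ⟨f y, hyC, ?_⟩
      calc dist (f x) (f y) ≤ K * dist x y := hf x y
        _ < K * ρ := by gcongr; rw [dist_comm]; linarith
        _ = _ := hKρ
    have hmeas := measure_mono (μ := volume) hsub
    rw [measure_biUnion_finset] at hmeas
    · have hle : volume (Metric.cthickening (ρ / 2) S \ f ⁻¹' C') ≤
          volume (Metric.cthickening (ρ / 2) S \ S) + volume (S \ f ⁻¹' C') := by
        refine (measure_mono ?_).trans (measure_union_le _ _)
        intro y hy
        by_cases hyS : y ∈ S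
        · exact Or.inr ⟨hyS, hy.2⟩
        · exact Or.inl ⟨hy.1, hyS⟩
      have hfin1 : volume (Metric.cthickening (ρ / 2) S) ≠ ⊤ := hS.cthickening.measure_lt_top.ne
      have hfin2 : volume (Metric.cthickening (ρ / 2) S \ S) ≠ ⊤ :=
        measure_ne_top_of_subset Set.diff_subset hfin1
      have hfin3 : volume (S \ f ⁻¹' C') ≠ ⊤ :=
        measure_ne_top_of_subset Set.diff_subset hS.measure_lt_top.ne
      have hmeas2 := ENNReal.toReal_mono (ENNReal.add_ne_top.2 ⟨hfin2, hfin3⟩) (hmeas.trans hle)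
      rw [ENNReal.toReal_add hfin2 hfin3, measure_diff (Metric.self_subset_cthickening S)
        hS.measurableSet.nullMeasurableSet hS.measure_lt_top.ne, ENNReal.toReal_sub_of_le
        (measure_mono (Metric.self_subset_cthickening S)) hfin1] at hmeas2
      have hball : ∀ x : EuclideanSpace ℝ (Fin n), volume (Metric.ball x (ρ / 2)) =
          ENNReal.ofReal ((ρ / 2) ^ n) * volume (Metric.ball (0 : EuclideanSpace ℝ (Fin n)) 1) := by
        intro x
        rw [Measure.addHaar_ball_of_pos _ _ (by positivity), finrank_euclideanSpace_fin]
      simp only [hball, Finset.sum_const, nsmul_eq_mul, ENNReal.toReal_mul, ENNReal.toReal_natCast,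
        ← hvB] at hmeas2
      rw [ENNReal.toReal_ofReal (by positivity)] at hmeas2
      have h1 : (T.card : ℝ) * ((ρ / 2) ^ n * vB) ≤ w := by linarith
      rw [← le_div_iff₀ (by positivity)] at h1
      refine h1.trans (le_of_eq ?_)
      rw [remConst, ← hvB, hρ, hε', div_eq_mul_inv, mul_inv, ← inv_pow, mul_assoc w, mul_comm _ (vB⁻¹),
        div_mul_eq_mul_div, ← mul_pow, div_eq_mul_inv _ vB, mul_comm _ (vB⁻¹)]
      congr 3
      field_simp
    · intro x hx y hy hxy
      rw [Function.onFun]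
      apply Metric.ball_disjoint_ball
      have := hT2 x hx y hy hxy
      linarith
    · intro x _; exact measurableSet_ball
  rw [hPQ]
  refine (A.subadd (hPb.smul₀ r) (hPm.const_smul₀ r) (hQc.smul r).isBounded
    (hQc.smul r).measurableSet).trans ?_
  exact add_le_add hrP hrQ

lemma eventually_smul_atTop {p : ℝ → Prop} {a : ℝ} (ha : 0 < a) :
    (∀ᶠ r in atTop, p r) ↔ ∀ᶠ r in atTop, p (a * r) := by
  constructor
  · intro h
    exact (tendsto_id.const_mul_atTop ha : Tendsto (fun r : ℝ => a * r) atTop atTop).eventually h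
  · intro h
    have h2 := (tendsto_id.const_mul_atTop (inv_pos.2 ha) :
      Tendsto (fun r : ℝ => a⁻¹ * r) atTop atTop).eventually h
    filter_upwards [h2] with r hr
    rwa [mul_inv_cancel_left₀ ha.ne'] at hr

lemma lb_compact {n : ℕ} (A : PackingBoundFunction) (F : Set (EuclideanSpace ℝ (Fin n)))
    (hF : IsCompact F) (c : ℝ) (hc : c < cubeInf A n * (volume F).toReal) :
    ∀ᶠ r : ℝ in atTop, c * r ^ n ≤ A.toFun n (r • F) := by
  set δ := cubeInf A n with hδ
  have hδ0 : 0 ≤ δ := cubeInf_nonneg A n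
  obtain ⟨R, hR0, hR⟩ := hF.isBounded.exists_pos_norm_le
  set v : EuclideanSpace ℝ (Fin n) := WithLp.toLp 2 fun _ => -R with hv
  set q := cubeAt v (2 * R) with hq
  have hqc : IsCompact q := isCompact_cubeAt _ _
  have hFq : F ⊆ q := by
    intro x hx i
    have hxi : |x i| ≤ R := (PiLp.norm_apply_le x i).trans (hR x hx)
    rw [abs_le] at hxi
    simp only [hv, Set.mem_Icc]
    constructor <;> linarith
  have hqv : (volume q).toReal = (2 * R) ^ n := volume_cubeAt v (by positivity)
  -- choose ε
  obtain ⟨ε, hε, hεc⟩ : ∃ ε : ℝ, 0 < ε ∧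
      c < δ * (volume q).toReal * ((1 + ε) ^ n)⁻¹ - δ * ((volume q).toReal - (volume F).toReal) := by
    have hcont : Tendsto (fun ε : ℝ => δ * (volume q).toReal * ((1 + ε) ^ n)⁻¹ -
        δ * ((volume q).toReal - (volume F).toReal)) (nhdsWithin 0 (Set.Ioi 0))
        (nhds (δ * (volume q).toReal * ((1 + 0) ^ n)⁻¹ - δ * ((volume q).toReal - (volume F).toReal))) := by
      apply tendsto_nhdsWithin_of_tendsto_nhds
      apply ContinuousAt.tendsto
      have : ((1:ℝ) + 0) ^ n ≠ 0 := by simp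
      fun_prop (disch := assumption)
    obtain ⟨ε, h1, h2⟩ := ((hcont.eventually_const_lt (show c < _ by
      simp; linarith)).and self_mem_nhdsWithin).exists
    exact ⟨ε, h2, h1⟩
  set M := remConst n 1 ε with hM
  have hM0 : 0 ≤ M := remConst_nonneg n one_pos hε
  -- choose η
  obtain ⟨η, hη, hηc⟩ : ∃ η : ℝ, 0 < η ∧
      c < δ * (volume q).toReal * ((1 + ε) ^ n)⁻¹ - δ * ((volume q).toReal - (volume F).toReal)
        - (1 + 2 * M) * η := by
    have hcont : Tendsto (fun η : ℝ => δ * (volume q).toReal * ((1 + ε) ^ n)⁻¹ -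
        δ * ((volume q).toReal - (volume F).toReal) - (1 + 2 * M) * η) (nhdsWithin 0 (Set.Ioi 0))
        (nhds (δ * (volume q).toReal * ((1 + ε) ^ n)⁻¹ - δ * ((volume q).toReal - (volume F).toReal)
          - (1 + 2 * M) * 0)) := by
      apply tendsto_nhdsWithin_of_tendsto_nhds
      exact Continuous.tendsto (by fun_prop) _
    obtain ⟨η, h1, h2⟩ := ((hcont.eventually_const_lt (show c < _ by
      simp only [mul_zero, sub_zero]; exact hεc)).and self_mem_nhdsWithin).exists
    exact ⟨η, h2, h1⟩
  have hqfin : volume q ≠ ⊤ := hqc.measure_lt_top.ne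
  obtain ⟨G, hG1, hG2, hG3⟩ := (hqc.measurableSet.diff hF.measurableSet).exists_isCompact_diff_lt
    (μ := volume) (measure_ne_top_of_subset Set.diff_subset hqfin)
    (ε := ENNReal.ofReal η) (by simpa using hη)
  have hGv : (volume G).toReal ≤ (volume q).toReal - (volume F).toReal := by
    have h1 := measure_mono (μ := volume) hG1
    rw [measure_diff hFq hF.measurableSet.nullMeasurableSet hF.measure_lt_top.ne] at h1
    have h2 := ENNReal.toReal_mono (ne_top_of_le_ne_top hqfin tsub_le_self) h1
    rwa [ENNReal.toReal_sub_of_le (measure_mono hFq) hqfin] at h2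
  have hrem := remainder A (id : EuclideanSpace ℝ (Fin n) → _) one_pos (fun x y => by simp) hqc
    (hF.union hG2) hε (w := 2 * η) (by
      have : q \ id ⁻¹' (F ∪ G) = (q \ F) \ G := by
        rw [Set.preimage_id, Set.diff_diff]
      rw [this]
      have := ENNReal.toReal_mono (by simp) hG3.le
      rw [ENNReal.toReal_ofReal hη.le] at this
      linarith)
  have hub := ub_compact A G hG2 (δ * (volume G).toReal + η) (by linarith)
  rw [eventually_smul_atTop (a := 1 + ε) (by positivity)] at hub ⊢
  filter_upwards [hrem, hub, eventually_gt_atTop 0] with r h1 h2 hr0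
  rw [Set.image_id] at h1
  have h3 : δ * (volume q).toReal * r ^ n ≤ A.toFun n (r • q) := by
    rw [hqv, hq, smul_cubeAt _ hr0]
    have h4 := cubeInf_le A n (s := r * (2 * R)) (by positivity)
    rw [smul_unitCube (by positivity)] at h4
    refine le_trans ?_ (h4.trans (cubeAt_le A _ _ _))
    rw [← hδ, mul_pow r]
    exact le_of_eq (by ring)
  have h5 := A.subadd (hF.smul ((1 + ε) * r)).isBounded (hF.smul ((1 + ε) * r)).measurableSet
    (hG2.smul ((1 + ε) * r)).isBounded (hG2.smul ((1 + ε) * r)).measurableSet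
  rw [← Set.smul_set_union] at h5
  have h6 : c * ((1 + ε) * r) ^ n ≤ (δ * (volume q).toReal * ((1 + ε) ^ n)⁻¹
      - δ * ((volume q).toReal - (volume F).toReal) - (1 + 2 * M) * η) * ((1 + ε) * r) ^ n := by gcongr
  have h7 : δ * (volume q).toReal * ((1 + ε) ^ n)⁻¹ * ((1 + ε) * r) ^ n
      = δ * (volume q).toReal * r ^ n := by
    rw [mul_pow]; field_simp
  have h8 : δ * (volume G).toReal * ((1 + ε) * r) ^ n ≤
      δ * ((volume q).toReal - (volume F).toReal) * ((1 + ε) * r) ^ n := by gcongr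
  have h9 : 2 * η * M * r ^ n ≤ 2 * η * M * ((1 + ε) * r) ^ n := by
    gcongr
    nlinarith
  rw [← hM] at h1
  nlinarith

/-! ### Expanding maps and almost flat pieces -/

/-- There is a map from `X` to `Y` that shrinks distances at most by the factor `L`. -/
def Expands {d d' : ℕ} (L : ℝ) (X : Set (EuclideanSpace ℝ (Fin d)))
    (Y : Set (EuclideanSpace ℝ (Fin d'))) : Prop :=
  ∃ ψ : EuclideanSpace ℝ (Fin d) → EuclideanSpace ℝ (Fin d'),
    (∀ x ∈ X, ψ x ∈ Y) ∧ ∀ x ∈ X, ∀ y ∈ X, dist x y ≤ L * dist (ψ x) (ψ y)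

lemma Expands.A_le {d d' : ℕ} {L : ℝ} {X : Set (EuclideanSpace ℝ (Fin d))}
    {Y : Set (EuclideanSpace ℝ (Fin d'))} (h : Expands L X Y) (A : PackingBoundFunction)
    (hX : IsCompact X) (hY : IsCompact Y) (hL : 0 < L) {r : ℝ} (hr : 0 < r) :
    A.toFun d (r • X) ≤ A.toFun d' ((L * r) • Y) := by
  obtain ⟨ψ, h1, h2⟩ := h
  have cX := isCompact_smul_set hX r
  have cY := isCompact_smul_set hY (L * r)
  refine A.lipschitz _ _ _ _ cX.isBounded cX.measurableSet cY.isBounded cY.measurableSet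
    ⟨fun z => (L * r) • ψ (r⁻¹ • z), ?_, ?_⟩
  · rintro _ ⟨x, hx, rfl⟩
    simp only [smul_smul, inv_mul_cancel₀ hr.ne', one_smul]
    exact Set.smul_mem_smul_set (h1 x hx)
  · rintro _ ⟨x, hx, rfl⟩ _ ⟨y, hy, rfl⟩
    simp only [smul_smul, inv_mul_cancel₀ hr.ne', one_smul, dist_smul₀]
    have := h2 x hx y hy
    rw [Real.norm_of_nonneg hr.le, Real.norm_of_nonneg (by positivity)]
    nlinarith

lemma normHausdorff_image_le {n d d' : ℕ} {K : NNReal}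
    {g : EuclideanSpace ℝ (Fin d) → EuclideanSpace ℝ (Fin d')} {s : Set (EuclideanSpace ℝ (Fin d))}
    (h : LipschitzOnWith K g s) :
    normHausdorff n d' (g '' s) ≤ (K : ENNReal) ^ n * normHausdorff n d s := by
  have := h.hausdorffMeasure_image_le (d := (n : ℝ)) (by positivity)
  simp only [normHausdorff, Measure.smul_apply, smul_eq_mul]
  rw [ENNReal.rpow_natCast] at this
  calc _ ≤ (volume (Metric.ball (0 : EuclideanSpace ℝ (Fin n)) 1) / 2 ^ n) * _ :=
        mul_le_mul_right this _
    _ = _ := by ring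

lemma Expands.H_le {n d d' : ℕ} {L : NNReal} {X : Set (EuclideanSpace ℝ (Fin d))}
    {Y : Set (EuclideanSpace ℝ (Fin d'))} (h : Expands L X Y) :
    normHausdorff n d X ≤ (L : ENNReal) ^ n * normHausdorff n d' Y := by
  obtain ⟨ψ, h1, h2⟩ := h
  have hinj : Set.InjOn ψ X := by
    intro x hx y hy hxy
    have := h2 x hx y hy
    rw [hxy, dist_self, mul_zero] at this
    exact dist_le_zero.1 this
  have hl := hinj.leftInvOn_invFunOn
  have hLip : LipschitzOnWith L (Function.invFunOn ψ X) (ψ '' X) := by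
    apply LipschitzOnWith.of_dist_le_mul
    rintro _ ⟨x, hx, rfl⟩ _ ⟨y, hy, rfl⟩
    rw [hl hx, hl hy]
    exact h2 x hx y hy
  have := normHausdorff_image_le (n := n) hLip
  rw [hl.image_image] at this
  refine this.trans (mul_le_mul_right (measure_mono ?_) _)
  rintro _ ⟨x, hx, rfl⟩
  exact h1 x hx

/-- Upper bound for sets that expand into a compact subset of `ℝ^n`. -/
lemma Expands.ub {n d : ℕ} {L : ℝ} {X : Set (EuclideanSpace ℝ (Fin d))}
    {Y : Set (EuclideanSpace ℝ (Fin n))} (h : Expands L X Y) (A : PackingBoundFunction)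
    (hX : IsCompact X) (hY : IsCompact Y) (hL : 0 < L) {c : ℝ}
    (hc : cubeInf A n * (L ^ n * (volume Y).toReal) < c) :
    ∀ᶠ r : ℝ in atTop, A.toFun d (r • X) ≤ c * r ^ n := by
  have h1 := ub_compact A Y hY (c / L ^ n) (by
    rw [lt_div_iff₀ (by positivity)]
    calc _ = _ := by ring
      _ < c := hc)
  rw [eventually_smul_atTop hL] at h1
  filter_upwards [h1, eventually_gt_atTop 0] with r hr hr0
  refine (h.A_le A hX hY hL hr0).trans (hr.trans (le_of_eq ?_))
  rw [mul_pow]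
  field_simp

/-- Lower bound for sets into which a compact subset of `ℝ^n` expands. -/
lemma Expands.lb {n d : ℕ} {L : ℝ} {X : Set (EuclideanSpace ℝ (Fin d))}
    {Y : Set (EuclideanSpace ℝ (Fin n))} (h : Expands L Y X) (A : PackingBoundFunction)
    (hX : IsCompact X) (hY : IsCompact Y) (hL : 0 < L) {c : ℝ}
    (hc : c * L ^ n < cubeInf A n * (volume Y).toReal) :
    ∀ᶠ r : ℝ in atTop, c * r ^ n ≤ A.toFun d (r • X) := by
  have h1 := lb_compact A Y hY (c * L ^ n) hc
  rw [eventually_smul_atTop (inv_pos.2 hL)] at h1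
  filter_upwards [h1, eventually_gt_atTop 0] with r hr hr0
  have h2 := h.A_le A hY hX hL (r := L⁻¹ * r) (by positivity)
  rw [← mul_assoc, mul_inv_cancel₀ hL.ne', one_mul] at h2
  refine le_trans (le_of_eq ?_) (hr.trans h2)
  rw [mul_pow, inv_pow]
  field_simp

/-- Almost flat compact sets. -/
def AlmostFlat {d : ℕ} (n : ℕ) (L : NNReal) (X : Set (EuclideanSpace ℝ (Fin d))) : Prop :=
  ∃ Y : Set (EuclideanSpace ℝ (Fin n)), IsCompact Y ∧ Expands L X Y ∧ Expands L Y X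

lemma AlmostFlat.ub {n d : ℕ} (hn : 1 ≤ n) {L : NNReal} {X : Set (EuclideanSpace ℝ (Fin d))}
    (h : AlmostFlat n L X) (hL : 0 < L) (A : PackingBoundFunction)
    (hX : IsCompact X) (hfin : normHausdorff n d X ≠ ⊤) {c : ℝ}
    (hc : cubeInf A n * ((L : ℝ) ^ (2 * n) * (normHausdorff n d X).toReal) < c) :
    ∀ᶠ r : ℝ in atTop, A.toFun d (r • X) ≤ c * r ^ n := by
  obtain ⟨Y, hY, h1, h2⟩ := h
  refine h1.ub A hX hY (by exact_mod_cast hL) (lt_of_le_of_lt ?_ hc)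
  refine mul_le_mul_of_nonneg_left ?_ (cubeInf_nonneg A n)
  have := h2.H_le (n := n)
  rw [normHausdorff_self n hn] at this
  have h3 := ENNReal.toReal_mono (ENNReal.mul_ne_top (by simp) hfin) this
  rw [ENNReal.toReal_mul, ENNReal.toReal_pow, ENNReal.coe_toReal] at h3
  calc _ ≤ (L : ℝ) ^ n * ((L : ℝ) ^ n * (normHausdorff n d X).toReal) := by gcongr
    _ = _ := by ring

lemma AlmostFlat.lb {n d : ℕ} (hn : 1 ≤ n) {L : NNReal} {X : Set (EuclideanSpace ℝ (Fin d))}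
    (h : AlmostFlat n L X) (hL : 0 < L) (A : PackingBoundFunction)
    (hX : IsCompact X) {c : ℝ}
    (hc : c * (L : ℝ) ^ (2 * n) < cubeInf A n * (normHausdorff n d X).toReal) :
    ∀ᶠ r : ℝ in atTop, c * r ^ n ≤ A.toFun d (r • X) := by
  obtain ⟨Y, hY, h1, h2⟩ := h
  have hL' : (0 : ℝ) < L := by exact_mod_cast hL
  refine h2.lb A hX hY hL' ?_
  have := h1.H_le (n := n)
  rw [normHausdorff_self n hn] at this
  have h3 := ENNReal.toReal_mono (ENNReal.mul_ne_top (by simp) hY.measure_lt_top.ne) this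
  rw [ENNReal.toReal_mul, ENNReal.toReal_pow, ENNReal.coe_toReal] at h3
  have h4 := mul_le_mul_of_nonneg_left h3 (cubeInf_nonneg A n)
  have h5 : (0 : ℝ) < (L : ℝ) ^ n := by positivity
  refine lt_of_mul_lt_mul_right (a := (L : ℝ) ^ n) ?_ h5.le
  calc _ = c * (L : ℝ) ^ (2 * n) := by ring
    _ < _ := hc
    _ ≤ _ := h4
    _ = _ := by ring

/-! ### Linear algebra -/

lemma linear_inj {n d : ℕ} (L : EuclideanSpace ℝ (Fin n) →L[ℝ] EuclideanSpace ℝ (Fin d))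
    (hL : Function.Injective L) {ε : ℝ} (hε : 0 < ε) :
    ∃ ρ : NNReal, ρ ≠ 0 ∧ ∃ T : EuclideanSpace ℝ (Fin n) →ₗ[ℝ] EuclideanSpace ℝ (Fin n),
      Function.Injective T ∧ ∀ v w, ‖w - L v‖ ≤ ρ * ‖v‖ →
        ‖w‖ ≤ (1 + ε) * ‖T v‖ ∧ ‖T v‖ ≤ (1 + ε) * ‖w‖ := by
  have hfr : Module.finrank ℝ (LinearMap.range L.toLinearMap) = n := by
    rw [LinearMap.finrank_range_of_inj hL]; simp
  let e : LinearMap.range L.toLinearMap ≃ₗᵢ[ℝ] EuclideanSpace ℝ (Fin n) :=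
    (stdOrthonormalBasis ℝ _).reindex (finCongr hfr) |>.repr
  let T : EuclideanSpace ℝ (Fin n) →ₗ[ℝ] EuclideanSpace ℝ (Fin n) :=
    e.toLinearEquiv.toLinearMap ∘ₗ L.toLinearMap.rangeRestrict
  have hT : ∀ v, ‖T v‖ = ‖L v‖ := fun v => by
    simp [T]
  obtain ⟨K, hK, hKa⟩ := L.toLinearMap.exists_antilipschitzWith (LinearMap.ker_eq_bot.2 hL)
  have hKv : ∀ v, ‖v‖ ≤ K * ‖L v‖ := fun v => by
    have := hKa.le_mul_dist v 0
    simpa using this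
  have hK' : (0 : ℝ) < K := by exact_mod_cast hK
  have hinj : Function.Injective T := by
    rw [injective_iff_map_eq_zero]
    intro v hv
    have := hT v
    rw [hv, norm_zero] at this
    have h2 := hKv v
    rw [← this, mul_zero] at h2
    exact norm_le_zero_iff.1 h2
  have hp : 0 < ε / (1 + ε) / K := by positivity
  refine ⟨⟨ε / (1 + ε) / K, hp.le⟩, fun h => hp.ne' (congrArg NNReal.toReal h), T, hinj, ?_⟩
  intro v w hvw
  rw [hT]
  have h1 : ‖w - L v‖ ≤ ε / (1 + ε) * ‖L v‖ := by
    refine hvw.trans ?_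
    change ε / (1 + ε) / K * ‖v‖ ≤ _
    calc _ ≤ ε / (1 + ε) / K * (K * ‖L v‖) := by gcongr; exact hKv v
      _ = _ := by field_simp
  have h0 := norm_nonneg (L v)
  have h2 : ε / (1 + ε) * ‖L v‖ * (1 + ε) = ε * ‖L v‖ := by field_simp
  have h3 : ‖w‖ ≤ ‖w - L v‖ + ‖L v‖ := by simpa using norm_add_le (w - L v) (L v)
  have h4 : ‖L v‖ ≤ ‖w - L v‖ + ‖w‖ := by
    have := norm_sub_le w (w - L v)
    simp only [sub_sub_cancel] at this
    linarith
  have h5 : ε / (1 + ε) * ‖L v‖ ≤ ε * ‖L v‖ := by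
    gcongr
    exact div_le_self hε.le (by linarith)
  constructor
  · nlinarith
  · nlinarith

lemma linear_degen {n d : ℕ} (L : EuclideanSpace ℝ (Fin n) →L[ℝ] EuclideanSpace ℝ (Fin d))
    (hL : ¬ Function.Injective L) {η : ℝ} (hη : 0 < η) :
    ∃ ρ : NNReal, ρ ≠ 0 ∧ ∃ B : EuclideanSpace ℝ (Fin n) →ₗ[ℝ] EuclideanSpace ℝ (Fin n),
      |LinearMap.det B| ≤ η ∧ ∀ v w, ‖w - L v‖ ≤ ρ * ‖v‖ → ‖w‖ ≤ ‖B v‖ := by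
  obtain ⟨v₀, hv0, hv0'⟩ : ∃ v, L v = 0 ∧ v ≠ 0 := by
    by_contra! h
    exact hL ((injective_iff_map_eq_zero L).2 h)
  obtain ⟨m, rfl⟩ : ∃ m, n = m + 1 := by
    cases n with
    | zero => exact absurd (Subsingleton.elim v₀ 0) hv0'
    | succ m => exact ⟨m, rfl⟩
  set e := ‖v₀‖⁻¹ • v₀ with he
  have hen : ‖e‖ = 1 := by rw [he]; exact norm_smul_inv_norm hv0'
  have heL : L e = 0 := by rw [he, map_smul, hv0, smul_zero]
  clear_value e
  obtain ⟨b, hb⟩ := Orthonormal.exists_orthonormalBasis_extension_of_card_eq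
    (𝕜 := ℝ) (E := EuclideanSpace ℝ (Fin (m + 1))) (ι := Fin (m + 1)) (by simp)
    (v := fun _ => e) (s := {0}) (by
      constructor
      · intro i; simpa using hen
      · intro i j hij; exact absurd (Subsingleton.elim i j) hij)
  have hb0 : b 0 = e := hb 0 rfl
  set M : ℝ := 2 * (‖L‖ + 1) with hM
  have hM1 : 0 < M := by positivity
  set c : ℝ := η / M ^ m with hc
  have hc0 : 0 < c := by positivity
  let D : EuclideanSpace ℝ (Fin (m + 1)) →ₗ[ℝ] EuclideanSpace ℝ (Fin (m + 1)) :=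
    Matrix.toLin b.toBasis b.toBasis (Matrix.diagonal (Fin.cons c fun _ => M))
  have hDb : ∀ i, D (b i) = (Fin.cons c (fun _ => M) : Fin (m + 1) → ℝ) i • b i := by
    intro i
    have := Matrix.toLin_self b.toBasis b.toBasis (Matrix.diagonal (Fin.cons c fun _ => M)) i
    simp only [OrthonormalBasis.coe_toBasis] at this
    simp only [D]
    rw [this, Finset.sum_eq_single i]
    · simp
    · intro j _ hj; rw [Matrix.diagonal_apply_ne _ hj, zero_smul]
    · simp
  have hdet : LinearMap.det D = η := by
    simp only [D]
    rw [LinearMap.det_toLin, Matrix.det_diagonal, Fin.prod_univ_succ]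
    simp only [Fin.cons_zero, Fin.cons_succ, Finset.prod_const, Finset.card_univ, Fintype.card_fin]
    rw [hc]; field_simp
  have hD : D = M • LinearMap.id + (c - M) • (innerSL ℝ e).toLinearMap.smulRight e := by
    apply b.toBasis.ext
    intro i
    rw [OrthonormalBasis.coe_toBasis, hDb]
    refine Fin.cases ?_ (fun i => ?_) i
    · simp [hb0, inner_self_eq_norm_sq_to_K, hen]
      module
    · have : inner ℝ e (b i.succ) = 0 := by
        rw [← hb0]; exact b.orthonormal.2 (Fin.succ_ne_zero i).symm
      simp [this]
  have hDv : ∀ v, D v = (c * inner ℝ e v) • e + M • (v - (inner ℝ e v) • e) := by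
    intro v
    rw [hD]
    simp
    module
  have hee : inner ℝ e e = (1 : ℝ) := by rw [real_inner_self_eq_norm_sq, hen]; norm_num
  have horth : ∀ v, inner ℝ e (v - (inner ℝ e v) • e) = (0 : ℝ) := by
    intro v
    rw [inner_sub_right, inner_smul_right, hee]; ring
  have hpyth : ∀ (v) (s t : ℝ), ‖s • e + t • (v - (inner ℝ e v) • e)‖ ^ 2
      = s ^ 2 + t ^ 2 * ‖v - (inner ℝ e v : ℝ) • e‖ ^ 2 := by
    intro v s t
    rw [norm_add_sq_real, norm_smul, norm_smul, inner_smul_left, inner_smul_right, horth, hen,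
      mul_pow, mul_pow, Real.norm_eq_abs, Real.norm_eq_abs, sq_abs, sq_abs]
    simp
  have hp : 0 < min 1 c / 2 := by positivity
  refine ⟨⟨min 1 c / 2, hp.le⟩, fun h => hp.ne' (congrArg NNReal.toReal h), D, ?_, ?_⟩
  · rw [hdet, abs_of_pos hη]
  intro v w hvw
  change ‖w - L v‖ ≤ min 1 c / 2 * ‖v‖ at hvw
  set v' := v - (inner ℝ e v : ℝ) • e with hv'
  set a : ℝ := inner ℝ e v with ha
  have h1 : ‖D v‖ ^ 2 = (c * a) ^ 2 + M ^ 2 * ‖v'‖ ^ 2 := by rw [hDv, hpyth]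
  have h2 : ‖v‖ ^ 2 = a ^ 2 + ‖v'‖ ^ 2 := by
    have := hpyth v a 1
    rw [one_smul, add_sub_cancel] at this
    rw [this]; ring
  have h3 : L v = L v' := by rw [hv', map_sub, map_smul, heL, smul_zero, sub_zero]
  have h4 : ‖w‖ ≤ ‖w - L v‖ + ‖L v'‖ := by
    rw [← h3]; simpa using norm_add_le (w - L v) (L v)
  have h5 : ‖L v'‖ ≤ ‖L‖ * ‖v'‖ := L.le_opNorm v'
  have h6 : ‖w‖ ≤ min 1 c / 2 * ‖v‖ + ‖L‖ * ‖v'‖ := by linarith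
  have hm1 : min 1 c ≤ 1 := min_le_left _ _
  have hm2 : min 1 c ≤ c := min_le_right _ _
  have hm0 : 0 < min 1 c := by positivity
  set q := min 1 c with hq
  have hL0 := norm_nonneg L
  refine le_of_sq_le_sq ?_ (norm_nonneg _)
  calc ‖w‖ ^ 2 ≤ (q / 2 * ‖v‖ + ‖L‖ * ‖v'‖) ^ 2 := by gcongr
    _ ≤ 2 * (q / 2 * ‖v‖) ^ 2 + 2 * (‖L‖ * ‖v'‖) ^ 2 := by
      nlinarith [sq_nonneg (q / 2 * ‖v‖ - ‖L‖ * ‖v'‖)]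
    _ = q ^ 2 / 2 * a ^ 2 + (q ^ 2 / 2 + 2 * ‖L‖ ^ 2) * ‖v'‖ ^ 2 := by
      rw [mul_pow, h2]; ring
    _ ≤ c ^ 2 * a ^ 2 + M ^ 2 * ‖v'‖ ^ 2 := by
      gcongr
      · nlinarith
      · rw [hM]; nlinarith
    _ = ‖D v‖ ^ 2 := by rw [h1]; ring

/-! ### Decomposition of a rectifiable set -/

lemma select_compact {d : ℕ} (μ : Measure (EuclideanSpace ℝ (Fin d))) [IsFiniteMeasure μ]
    (B : ℕ → Set (EuclideanSpace ℝ (Fin d))) (hB : ∀ i, MeasurableSet (B i))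
    {η : ENNReal} (hη : η ≠ 0) :
    ∃ (P : ℕ → Set (EuclideanSpace ℝ (Fin d))) (m : ℕ), (∀ i, IsCompact (P i)) ∧
      (∀ i, P i ⊆ B i) ∧ μ ((⋃ i, B i) \ ⋃ i ∈ Finset.range m, P i) ≤ η := by
  obtain ⟨η', hη', hsum⟩ := ENNReal.exists_pos_sum_of_countable hη ℕ
  have h1 : ∀ i, ∃ P ⊆ B i, IsCompact P ∧ μ (B i \ P) < η' i := fun i =>
    (hB i).exists_isCompact_sdiff_lt (measure_ne_top μ _) (by simpa using (hη' i).ne')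
  choose P hPB hPc hPm using h1
  set U : ℕ → Set (EuclideanSpace ℝ (Fin d)) :=
    fun m => (⋃ i, B i) \ ⋃ i ∈ Finset.range m, P i with hU
  have hUm : ∀ m, MeasurableSet (U m) := fun m =>
    (MeasurableSet.iUnion hB).diff (Finset.measurableSet_biUnion _ fun i _ => (hPc i).measurableSet)
  have hanti : Antitone U := by
    intro a b hab
    apply Set.sdiff_subset_sdiff_right
    apply Set.biUnion_subset_biUnion_left
    intro i hi
    simp only [Finset.coe_range, Set.mem_Iio] at hi ⊢
    omega
  have ht := tendsto_measure_iInter_atTop (μ := μ) (fun m => (hUm m).nullMeasurableSet) hanti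
    ⟨0, measure_ne_top μ _⟩
  have hlt : μ (⋂ m, U m) < η := by
    have hsub : (⋂ m, U m) ⊆ ⋃ i, B i \ P i := by
      intro x hx
      rw [Set.mem_iInter] at hx
      obtain ⟨i, hi⟩ := Set.mem_iUnion.1 (hx 0).1
      refine Set.mem_iUnion.2 ⟨i, hi, fun hxP => (hx (i + 1)).2 ?_⟩
      exact Set.mem_biUnion (Finset.mem_coe.2 (Finset.self_mem_range_succ i)) hxP
    calc _ ≤ μ (⋃ i, B i \ P i) := measure_mono hsub
      _ ≤ ∑' i, μ (B i \ P i) := measure_iUnion_le _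
      _ ≤ ∑' i, (η' i : ENNReal) := ENNReal.tsum_le_tsum fun i => (hPm i).le
      _ < η := hsum
  obtain ⟨m, hm⟩ := (ht.eventually (gt_mem_nhds hlt)).exists
  exact ⟨P, m, hPc, hPB, hm.le⟩

lemma almostFlat_of_approx {n d : ℕ} {f : EuclideanSpace ℝ (Fin n) → EuclideanSpace ℝ (Fin d)}
    {T : EuclideanSpace ℝ (Fin n) →ₗ[ℝ] EuclideanSpace ℝ (Fin n)}
    {E : Set (EuclideanSpace ℝ (Fin n))} {L : NNReal}
    (h : ∀ x ∈ E, ∀ y ∈ E, ‖f x - f y‖ ≤ L * ‖T (x - y)‖ ∧ ‖T (x - y)‖ ≤ L * ‖f x - f y‖)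
    {P : Set (EuclideanSpace ℝ (Fin d))} (hP : IsCompact P) (hPE : P ⊆ f '' E) :
    AlmostFlat n L P := by
  have h1 : ∀ p ∈ P, ∃ x ∈ E, f x = p := fun p hp => hPE hp
  choose! g hgE hg using h1
  set k := fun p => T (g p) with hk
  have hk1 : ∀ p ∈ P, ∀ q ∈ P, dist p q ≤ L * dist (k p) (k q) := by
    intro p hp q hq
    have := (h _ (hgE p hp) _ (hgE q hq)).1
    rwa [hg p hp, hg q hq, map_sub, ← dist_eq_norm, ← dist_eq_norm] at this
  have hk2 : ∀ p ∈ P, ∀ q ∈ P, dist (k p) (k q) ≤ L * dist p q := by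
    intro p hp q hq
    have := (h _ (hgE p hp) _ (hgE q hq)).2
    rwa [hg p hp, hg q hq, map_sub, ← dist_eq_norm, ← dist_eq_norm] at this
  have hkL : LipschitzOnWith L k P := LipschitzOnWith.of_dist_le_mul hk2
  refine ⟨k '' P, hP.image_of_continuousOn hkL.continuousOn,
    ⟨k, fun x hx => Set.mem_image_of_mem k hx, hk1⟩, ?_⟩
  have h2 : ∀ z ∈ k '' P, ∃ p ∈ P, k p = z := fun z hz => hz
  choose! j hjP hj using h2
  refine ⟨j, hjP, fun x hx y hy => ?_⟩
  have := hk2 _ (hjP x hx) _ (hjP y hy)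
  rwa [hj x hx, hj y hy] at this

lemma expands_of_approx {n d : ℕ} {f : EuclideanSpace ℝ (Fin n) → EuclideanSpace ℝ (Fin d)}
    {B : EuclideanSpace ℝ (Fin n) →ₗ[ℝ] EuclideanSpace ℝ (Fin n)}
    {E : Set (EuclideanSpace ℝ (Fin n))}
    (h : ∀ x ∈ E, ∀ y ∈ E, ‖f x - f y‖ ≤ ‖B (x - y)‖)
    {X : Set (EuclideanSpace ℝ (Fin n))} (hX : X ⊆ E) :
    Expands 1 (f '' X) (B '' X) := by
  have h1 : ∀ p ∈ f '' X, ∃ x ∈ X, f x = p := fun p hp => hp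
  choose! g hgE hg using h1
  refine ⟨fun p => B (g p), fun p hp => Set.mem_image_of_mem _ (hgE p hp), fun p hp q hq => ?_⟩
  have := h _ (hX (hgE p hp)) _ (hX (hgE q hq))
  rw [hg p hp, hg q hq, map_sub, ← dist_eq_norm, ← dist_eq_norm] at this
  simpa using this

lemma volume_image_le {n : ℕ} (B : EuclideanSpace ℝ (Fin n) →ₗ[ℝ] EuclideanSpace ℝ (Fin n))
    {η : ℝ} (hB : |LinearMap.det B| ≤ η) (X : Set (EuclideanSpace ℝ (Fin n))) :
    volume (B '' X) ≤ ENNReal.ofReal η * volume X := by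
  rw [Measure.addHaar_image_linearMap]
  gcongr

open Classical in
lemma decomp {n d : ℕ} (hn : 1 ≤ n) {f : EuclideanSpace ℝ (Fin n) → EuclideanSpace ℝ (Fin d)}
    {K : NNReal} (hf : LipschitzWith K f) {S : Set (EuclideanSpace ℝ (Fin n))} (hS : IsCompact S)
    {ε η : ℝ} (hε : 0 < ε) (hη : 0 < η) {L : NNReal} (hL : (L : ℝ) = 1 + ε) :
    ∃ (P : ℕ → Set (EuclideanSpace ℝ (Fin d))) (m : ℕ)
      (Z : ℕ → Set (EuclideanSpace ℝ (Fin n))) (m' : ℕ),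
      (∀ i, IsCompact (P i) ∧ P i ⊆ f '' S ∧ AlmostFlat n L (P i)) ∧
      Pairwise (Function.onFun Disjoint P) ∧
      (∀ i, IsCompact (Z i) ∧ Z i ⊆ S ∧ ∃ Y : Set (EuclideanSpace ℝ (Fin n)), IsCompact Y ∧
        Expands 1 (f '' Z i) Y ∧ volume Y ≤ ENNReal.ofReal η * volume (Z i)) ∧
      Pairwise (Function.onFun Disjoint Z) ∧
      volume (S \ f ⁻¹' ((⋃ i ∈ Finset.range m, P i) ∪ ⋃ i ∈ Finset.range m', f '' Z i)) ≤
        ENNReal.ofReal η + ENNReal.ofReal η ∧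
      normHausdorff n d (f '' S \ ⋃ i ∈ Finset.range m, P i) ≤
        ENNReal.ofReal η + ENNReal.ofReal η * volume S := by
  have key : ∀ Λ : EuclideanSpace ℝ (Fin n) →L[ℝ] EuclideanSpace ℝ (Fin d),
      ∃ ρ : NNReal, ρ ≠ 0 ∧
        (Function.Injective Λ → ∃ T : EuclideanSpace ℝ (Fin n) →ₗ[ℝ] EuclideanSpace ℝ (Fin n),
          Function.Injective T ∧ ∀ v w, ‖w - Λ v‖ ≤ ρ * ‖v‖ →
          ‖w‖ ≤ (1 + ε) * ‖T v‖ ∧ ‖T v‖ ≤ (1 + ε) * ‖w‖) ∧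
        (¬ Function.Injective Λ → ∃ B : EuclideanSpace ℝ (Fin n) →ₗ[ℝ] EuclideanSpace ℝ (Fin n),
          |LinearMap.det B| ≤ η ∧ ∀ v w, ‖w - Λ v‖ ≤ ρ * ‖v‖ → ‖w‖ ≤ ‖B v‖) := by
    intro Λ
    by_cases hΛ : Function.Injective Λ
    · obtain ⟨ρ, h1, h2⟩ := linear_inj Λ hΛ hε
      exact ⟨ρ, h1, fun _ => h2, fun h => absurd hΛ h⟩
    · obtain ⟨ρ, h1, h2⟩ := linear_degen Λ hΛ hη
      exact ⟨ρ, h1, fun h => absurd h hΛ, fun _ => h2⟩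
  choose ρ hρ0 hinj hdeg using key
  set D := S ∩ {x | DifferentiableAt ℝ f x} with hD
  have hDm : MeasurableSet D := hS.measurableSet.inter (measurableSet_of_differentiableAt ℝ f)
  have hSD : volume (S \ D) = 0 := by
    have := hf.ae_differentiableAt (μ := volume)
    refine measure_mono_null ?_ (ae_iff.1 this)
    rintro x ⟨hx, hxD⟩ hd
    exact hxD ⟨hx, hd⟩
  obtain ⟨t, Λ, htd, htm, htc, happ, -⟩ :=
    exists_partition_approximatesLinearOn_of_hasFDerivWithinAt f D (fderiv ℝ f)
      (fun x hx => hx.2.hasFDerivAt.hasFDerivWithinAt) ρ hρ0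
  set E : ℕ → Set (EuclideanSpace ℝ (Fin n)) := fun i => D ∩ t i with hE
  have hEm : ∀ i, MeasurableSet (E i) := fun i => hDm.inter (htm i)
  have hES : ∀ i, E i ⊆ S := fun i x hx => hx.1.1
  have hT : ∀ i, Function.Injective (Λ i) →
      ∃ T : EuclideanSpace ℝ (Fin n) →ₗ[ℝ] EuclideanSpace ℝ (Fin n), Function.Injective T ∧
      ∀ x ∈ E i, ∀ y ∈ E i, ‖f x - f y‖ ≤ L * ‖T (x - y)‖ ∧ ‖T (x - y)‖ ≤ L * ‖f x - f y‖ := by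
    intro i hi
    obtain ⟨T, hTi, hT⟩ := hinj (Λ i) hi
    refine ⟨T, hTi, fun x hx y hy => ?_⟩
    rw [hL]
    exact hT _ _ (happ i x hx y hy)
  have hB : ∀ i, ¬ Function.Injective (Λ i) →
      ∃ B : EuclideanSpace ℝ (Fin n) →ₗ[ℝ] EuclideanSpace ℝ (Fin n), |LinearMap.det B| ≤ η ∧
      ∀ x ∈ E i, ∀ y ∈ E i, ‖f x - f y‖ ≤ ‖B (x - y)‖ := by
    intro i hi
    obtain ⟨B, hB1, hB⟩ := hdeg (Λ i) hi
    exact ⟨B, hB1, fun x hx y hy => hB _ _ (happ i x hx y hy)⟩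
  set g : ℕ → Set (EuclideanSpace ℝ (Fin d)) :=
    fun i => if Function.Injective (Λ i) then f '' E i else ∅ with hg
  set W : ℕ → Set (EuclideanSpace ℝ (Fin n)) :=
    fun i => if Function.Injective (Λ i) then ∅ else E i with hW
  have hgm : ∀ i, MeasurableSet (g i) := by
    intro i
    by_cases hi : Function.Injective (Λ i)
    · simp only [hg, hi, if_true]
      obtain ⟨T, hTi, hT⟩ := hT i hi
      refine (hEm i).image_of_continuousOn_injOn hf.continuous.continuousOn fun x hx y hy hxy => ?_
      have := (hT x hx y hy).2
      rw [hxy, sub_self, norm_zero, mul_zero] at this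
      have h0 : T (x - y) = T 0 := by rw [map_zero]; exact norm_le_zero_iff.1 this
      exact sub_eq_zero.1 (hTi h0)
    · simp [hg, hi]
  have hWm : ∀ i, MeasurableSet (W i) := by
    intro i
    by_cases hi : Function.Injective (Λ i) <;> simp [hW, hi, hEm]
  have hWE : ∀ i, W i ⊆ E i := by
    intro i
    by_cases hi : Function.Injective (Λ i) <;> simp [hW, hi]
  have hgS : ∀ i, g i ⊆ f '' S := by
    intro i
    by_cases hi : Function.Injective (Λ i)
    · simp only [hg, hi, if_true]; exact Set.image_mono (hES i)
    · simp [hg, hi]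
  have hEd : Pairwise (Function.onFun Disjoint E) := fun i j hij =>
    (htd hij).mono Set.inter_subset_right Set.inter_subset_right
  have hWd : Pairwise (Function.onFun Disjoint W) := fun i j hij =>
    (hEd hij).mono (hWE i) (hWE j)
  have hcov : ∀ x ∈ D, f x ∈ (⋃ i, g i) ∨ x ∈ ⋃ i, W i := by
    intro x hx
    obtain ⟨i, hi⟩ := Set.mem_iUnion.1 (htc hx)
    by_cases hI : Function.Injective (Λ i)
    · left
      refine Set.mem_iUnion.2 ⟨i, ?_⟩
      simp only [hg, hI, if_true]
      exact ⟨x, ⟨hx, hi⟩, rfl⟩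
    · right
      refine Set.mem_iUnion.2 ⟨i, ?_⟩
      simp only [hW, hI, if_false]
      exact ⟨hx, hi⟩
  have hη' : ENNReal.ofReal η ≠ 0 := by simpa using hη
  have : IsFiniteMeasure (volume.restrict S) := ⟨by simpa using hS.measure_lt_top⟩
  have : IsFiniteMeasure ((normHausdorff n d).restrict (f '' S)) := ⟨by
    rw [Measure.restrict_apply_univ]
    refine (normHausdorff_image_le (hf.lipschitzOnWith (s := S))).trans_lt ?_
    rw [normHausdorff_self n hn]
    exact ENNReal.mul_lt_top (by simp) hS.measure_lt_top⟩
  obtain ⟨P, m, hPc, hPg, hPm⟩ := select_compact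
    (Measure.map f (volume.restrict S) + (normHausdorff n d).restrict (f '' S))
    (disjointed g) (fun i => MeasurableSet.disjointed hgm i) hη'
  obtain ⟨Z, m', hZc, hZW, hZm⟩ := select_compact (volume.restrict S) W hWm hη'
  rw [iUnion_disjointed, Measure.add_apply] at hPm
  refine ⟨P, m, Z, m', fun i => ⟨hPc i, (hPg i).trans ((disjointed_subset g i).trans (hgS i)), ?_⟩,
    fun i j hij => (disjoint_disjointed g hij).mono (hPg i) (hPg j),
    fun i => ⟨hZc i, (hZW i).trans ((hWE i).trans (hES i)), ?_⟩,
    fun i j hij => (hWd hij).mono (hZW i) (hZW j), ?_, ?_⟩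
  · have hPg' : P i ⊆ g i := (hPg i).trans (disjointed_subset g i)
    by_cases hI : Function.Injective (Λ i)
    · obtain ⟨T, -, hT⟩ := hT i hI
      simp only [hg, hI, if_true] at hPg'
      exact almostFlat_of_approx hT (hPc i) hPg'
    · simp only [hg, hI, if_false, Set.subset_empty_iff] at hPg'
      rw [hPg']
      exact ⟨∅, isCompact_empty, ⟨fun _ => 0, by simp, by simp⟩, ⟨fun _ => 0, by simp, by simp⟩⟩
  · by_cases hI : Function.Injective (Λ i)
    · have hZ0 := hZW i
      simp only [hW, hI, if_true, Set.subset_empty_iff] at hZ0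
      rw [hZ0]
      exact ⟨∅, isCompact_empty, ⟨fun _ => 0, by simp, by simp⟩, by simp⟩
    · obtain ⟨B, hB1, hB2⟩ := hB i hI
      exact ⟨B '' Z i, (hZc i).image (LinearMap.continuous_of_finiteDimensional B),
        expands_of_approx hB2 ((hZW i).trans (hWE i)), volume_image_le B hB1 _⟩
  · have hsub : S \ f ⁻¹' ((⋃ i ∈ Finset.range m, P i) ∪ ⋃ i ∈ Finset.range m', f '' Z i) ⊆
        (S \ D) ∪ (((f ⁻¹' ((⋃ i, g i) \ ⋃ i ∈ Finset.range m, P i)) ∩ S) ∪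
          (((⋃ i, W i) \ ⋃ i ∈ Finset.range m', Z i) ∩ S)) := by
      rintro x ⟨hxS, hx⟩
      by_cases hxD : x ∈ D
      · right
        rw [Set.mem_preimage, Set.mem_union, not_or] at hx
        rcases hcov x hxD with h | h
        · left; exact ⟨⟨h, hx.1⟩, hxS⟩
        · right
          refine ⟨⟨h, fun hxZ => hx.2 ?_⟩, hxS⟩
          simp only [Set.mem_iUnion] at hxZ ⊢
          obtain ⟨i, hi, hxi⟩ := hxZ
          exact ⟨i, hi, x, hxi, rfl⟩
      · left; exact ⟨hxS, hxD⟩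
    refine (measure_mono hsub).trans ((measure_union_le _ _).trans ?_)
    rw [hSD, zero_add]
    refine (measure_union_le _ _).trans (add_le_add ?_ ?_)
    · refine (Measure.le_restrict_apply _ _).trans ?_
      refine (Measure.le_map_apply hf.continuous.measurable.aemeasurable _).trans ?_
      exact le_self_add.trans hPm
    · exact (Measure.le_restrict_apply _ _).trans hZm
  · have hsub : f '' S \ ⋃ i ∈ Finset.range m, P i ⊆
        (((⋃ i, g i) \ ⋃ i ∈ Finset.range m, P i) ∩ f '' S) ∪ (f '' (S \ D) ∪ ⋃ i, f '' W i) := by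
      rintro _ ⟨⟨x, hxS, rfl⟩, hx⟩
      by_cases hxD : x ∈ D
      · rcases hcov x hxD with h | h
        · left; exact ⟨⟨h, hx⟩, x, hxS, rfl⟩
        · right; right
          rw [← Set.image_iUnion]
          exact ⟨x, h, rfl⟩
      · right; left; exact ⟨x, ⟨hxS, hxD⟩, rfl⟩
    have h0 : normHausdorff n d (f '' (S \ D)) = 0 := by
      have := normHausdorff_image_le (n := n) (hf.lipschitzOnWith (s := S \ D))
      rw [normHausdorff_self n hn, hSD, mul_zero] at this
      exact le_antisymm this (zero_le)
    have hWi : ∀ i, normHausdorff n d (f '' W i) ≤ ENNReal.ofReal η * volume (W i) := by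
      intro i
      by_cases hI : Function.Injective (Λ i)
      · simp [hW, hI]
      · obtain ⟨B, hB1, hB2⟩ := hB i hI
        have h1 := expands_of_approx hB2 (hWE i)
        have h2 := Expands.H_le (n := n) (L := 1) (by simpa using h1)
        rw [normHausdorff_self n hn] at h2
        simp only [ENNReal.coe_one, one_pow, one_mul] at h2
        exact h2.trans (volume_image_le B hB1 _)
    refine (measure_mono hsub).trans ((measure_union_le _ _).trans (add_le_add ?_ ?_))
    · refine (Measure.le_restrict_apply _ _).trans ?_
      exact le_add_self.trans hPm
    · refine (measure_union_le _ _).trans ?_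
      rw [h0, zero_add]
      calc _ ≤ ∑' i, normHausdorff n d (f '' W i) := measure_iUnion_le _
        _ ≤ ∑' i, ENNReal.ofReal η * volume (W i) := ENNReal.tsum_le_tsum hWi
        _ = ENNReal.ofReal η * volume (⋃ i, W i) := by
          rw [ENNReal.tsum_mul_left, measure_iUnion hWd hWm]
        _ ≤ _ := by
          gcongr
          exact Set.iUnion_subset fun i => (hWE i).trans (hES i)

/-! ### Assembling the bounds -/

lemma eventually_sum_lb {ι : Type*} (T : Finset ι) (n : ℕ) (F : ι → ℝ → ℝ) (a : ι → ℝ)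
    (h : ∀ i ∈ T, ∀ c < a i, ∀ᶠ r : ℝ in atTop, c * r ^ n ≤ F i r) {c : ℝ}
    (hc : c < ∑ i ∈ T, a i) : ∀ᶠ r : ℝ in atTop, c * r ^ n ≤ ∑ i ∈ T, F i r := by
  set τ : ℝ := (∑ i ∈ T, a i - c) / (T.card + 1) with hτ
  have hτ0 : 0 < τ := div_pos (by linarith) (by positivity)
  have h1 : ∀ᶠ r : ℝ in atTop, ∀ i ∈ T, (a i - τ) * r ^ n ≤ F i r :=
    (eventually_all_finset T).2 fun i hi => h i hi _ (by linarith)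
  filter_upwards [h1, eventually_gt_atTop 0] with r hr hr0
  have h2 : c ≤ ∑ i ∈ T, (a i - τ) := by
    rw [Finset.sum_sub_distrib, Finset.sum_const, nsmul_eq_mul]
    have : τ * (T.card + 1) = ∑ i ∈ T, a i - c := by rw [hτ]; field_simp
    nlinarith
  calc c * r ^ n ≤ (∑ i ∈ T, (a i - τ)) * r ^ n := by gcongr
    _ = ∑ i ∈ T, (a i - τ) * r ^ n := by rw [Finset.sum_mul]
    _ ≤ _ := Finset.sum_le_sum hr

lemma eventually_sum_ub {ι : Type*} (T : Finset ι) (n : ℕ) (F : ι → ℝ → ℝ) (a : ι → ℝ)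
    (h : ∀ i ∈ T, ∀ c > a i, ∀ᶠ r : ℝ in atTop, F i r ≤ c * r ^ n) {c : ℝ}
    (hc : ∑ i ∈ T, a i < c) : ∀ᶠ r : ℝ in atTop, ∑ i ∈ T, F i r ≤ c * r ^ n := by
  have := eventually_sum_lb T n (fun i r => - F i r) (fun i => - a i) (fun i hi c hci => by
    filter_upwards [h i hi (-c) (by linarith)] with r hr
    linarith) (c := -c) (by rw [Finset.sum_neg_distrib]; linarith)
  filter_upwards [this] with r hr
  rw [Finset.sum_neg_distrib] at hr
  linarith

lemma eventually_separated {d : ℕ} (P : ℕ → Set (EuclideanSpace ℝ (Fin d)))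
    (hP : ∀ i, IsCompact (P i)) (hd : Pairwise (Function.onFun Disjoint P)) (m : ℕ) :
    ∀ᶠ r : ℝ in atTop, ∀ i ∈ Finset.range m, ∀ j ∈ Finset.range m, i ≠ j →
      ∀ x ∈ r • P i, ∀ y ∈ r • P j, 2 ≤ dist x y := by
  refine (eventually_all_finset _).2 fun i _ => (eventually_all_finset _).2 fun j _ => ?_
  by_cases hij : i = j
  · simp [hij]
  obtain ⟨s, hs, hdis⟩ := (hd hij).exists_thickenings (hP i) (hP j).isClosed
  filter_upwards [eventually_ge_atTop (2 / s), eventually_gt_atTop 0] with r hr hr0 _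
  rintro _ ⟨x, hx, rfl⟩ _ ⟨y, hy, rfl⟩
  simp only [dist_smul₀, Real.norm_of_nonneg hr0.le]
  have : s ≤ dist x y := by
    by_contra! hlt
    exact Set.disjoint_left.1 hdis (Metric.self_subset_thickening hs _ hx)
      (Metric.mem_thickening_iff.2 ⟨y, hy, hlt⟩)
  rw [div_le_iff₀ hs] at hr
  nlinarith

section Main

variable {n d : ℕ} {f : EuclideanSpace ℝ (Fin n) → EuclideanSpace ℝ (Fin d)} {K : NNReal}
  {S : Set (EuclideanSpace ℝ (Fin n))}

lemma normHausdorff_ne_top (hn : 1 ≤ n) (hf : LipschitzWith K f) (hS : IsCompact S) :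
    normHausdorff n d (f '' S) ≠ ⊤ := by
  refine ((normHausdorff_image_le (hf.lipschitzOnWith (s := S))).trans_lt ?_).ne
  rw [normHausdorff_self n hn]
  exact ENNReal.mul_lt_top (by simp) hS.measure_lt_top

lemma main_lb (hn : 1 ≤ n) (hf : LipschitzWith K f) (hS : IsCompact S)
    (A : PackingBoundFunction) {c : ℝ}
    (hc : c < cubeInf A n * (normHausdorff n d (f '' S)).toReal) :
    ∀ᶠ r : ℝ in atTop, c * r ^ n ≤ A.toFun d (r • (f '' S)) := by
  have hfin := normHausdorff_ne_top hn hf hS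
  set δ := cubeInf A n with hδ
  have hδ0 : 0 ≤ δ := cubeInf_nonneg A n
  set h := (normHausdorff n d (f '' S)).toReal with hh
  set V := (volume S).toReal with hV
  have hVf : volume S ≠ ⊤ := hS.measure_lt_top.ne
  obtain ⟨ε, hε, hεc⟩ : ∃ ε : ℝ, 0 < ε ∧ c * (1 + ε) ^ (2 * n) < δ * (h - (ε + ε * V)) := by
    have h1 : ContinuousAt (fun ε : ℝ => c * (1 + ε) ^ (2 * n) - δ * (h - (ε + ε * V))) 0 := by
      fun_prop
    have h2 : ∀ᶠ ε in nhds (0 : ℝ), c * (1 + ε) ^ (2 * n) - δ * (h - (ε + ε * V)) < 0 :=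
      h1.eventually_lt continuousAt_const (by simpa using hc)
    obtain ⟨ε, he, he0⟩ := ((h2.filter_mono nhdsWithin_le_nhds).and
      (self_mem_nhdsWithin (s := Set.Ioi (0 : ℝ)))).exists
    exact ⟨ε, he0, by linarith⟩
  let L : NNReal := ⟨1 + ε, by positivity⟩
  have hL : (L : ℝ) = 1 + ε := rfl
  have hL0 : 0 < L := by rw [← NNReal.coe_pos, hL]; positivity
  have hL0' : (0 : ℝ) < L := hL0
  obtain ⟨P, m, Z, m', hP, hPd, -, -, -, hH⟩ := decomp hn hf hS hε hε hL
  have hPf : ∀ i, normHausdorff n d (P i) ≠ ⊤ := fun i =>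
    ne_top_of_le_ne_top hfin (measure_mono (hP i).2.1)
  have hsum : h ≤ (ε + ε * V) + ∑ i ∈ Finset.range m, (normHausdorff n d (P i)).toReal := by
    have h1 : normHausdorff n d (f '' S) ≤ (ENNReal.ofReal ε + ENNReal.ofReal ε * volume S) +
        ∑ i ∈ Finset.range m, normHausdorff n d (P i) := by
      calc _ ≤ normHausdorff n d ((f '' S \ ⋃ i ∈ Finset.range m, P i) ∪
            ⋃ i ∈ Finset.range m, P i) := measure_mono (by
              intro x hx
              by_cases h : x ∈ ⋃ i ∈ Finset.range m, P i
              · exact Or.inr h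
              · exact Or.inl ⟨hx, h⟩)
        _ ≤ _ := (measure_union_le _ _).trans
          (add_le_add hH (measure_biUnion_finset_le _ _))
    have hs : ∑ i ∈ Finset.range m, normHausdorff n d (P i) ≠ ⊤ :=
      ENNReal.sum_ne_top.2 fun i _ => hPf i
    have hv : ENNReal.ofReal ε * volume S ≠ ⊤ := ENNReal.mul_ne_top (by simp) hVf
    have h2 := ENNReal.toReal_mono (ENNReal.add_ne_top.2 ⟨ENNReal.add_ne_top.2 ⟨by simp, hv⟩, hs⟩) h1
    rw [ENNReal.toReal_add (ENNReal.add_ne_top.2 ⟨by simp, hv⟩) hs,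
      ENNReal.toReal_add (by simp) hv, ENNReal.toReal_mul, ENNReal.toReal_ofReal hε.le,
      ENNReal.toReal_sum fun i _ => hPf i] at h2
    exact h2
  have hlb := eventually_sum_lb (Finset.range m) n (fun i r => A.toFun d (r • P i))
    (fun i => δ * (normHausdorff n d (P i)).toReal / (L : ℝ) ^ (2 * n))
    (fun i _ c hc => (hP i).2.2.lb hn hL0 A (hP i).1 (by rwa [lt_div_iff₀ (by positivity)] at hc))
    (c := c) (by
      rw [← Finset.sum_div, ← Finset.mul_sum, lt_div_iff₀ (by positivity), hL]
      refine hεc.trans_le (mul_le_mul_of_nonneg_left (by linarith) hδ0))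
  have hCc : IsCompact (f '' S) := hS.image hf.continuous
  filter_upwards [hlb, eventually_separated P (fun i => (hP i).1) hPd m] with r h1 h2
  have hc1 : ∀ i, IsCompact (r • P i) := fun i => isCompact_smul_set (hP i).1 r
  rw [← A.add_finset (Finset.range m) (fun i => r • P i) (fun i _ => (hc1 i).isBounded)
    (fun i _ => (hc1 i).measurableSet) h2] at h1
  refine h1.trans (A.mono' ?_ (Finset.measurableSet_biUnion _ fun i _ => (hc1 i).measurableSet)
    (isCompact_smul_set hCc r).isBounded (isCompact_smul_set hCc r).measurableSet)
  exact Set.iUnion₂_subset fun i _ => Set.smul_set_mono (hP i).2.1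

lemma main_ub (hn : 1 ≤ n) (hf : LipschitzWith K f) (hS : IsCompact S)
    (A : PackingBoundFunction) {c : ℝ}
    (hc : cubeInf A n * (normHausdorff n d (f '' S)).toReal < c) :
    ∀ᶠ r : ℝ in atTop, A.toFun d (r • (f '' S)) ≤ c * r ^ n := by
  have hfin := normHausdorff_ne_top hn hf hS
  set δ := cubeInf A n with hδ
  have hδ0 : 0 ≤ δ := cubeInf_nonneg A n
  set h := (normHausdorff n d (f '' S)).toReal with hh
  set V := (volume S).toReal with hV
  have hVf : volume S ≠ ⊤ := hS.measure_lt_top.ne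
  obtain ⟨ε, hε, hεc⟩ : ∃ ε : ℝ, 0 < ε ∧ δ * ((1 + ε) ^ (2 * n) * h) * (1 + ε) ^ n < c := by
    have h1 : ContinuousAt (fun ε : ℝ => δ * ((1 + ε) ^ (2 * n) * h) * (1 + ε) ^ n) 0 := by
      fun_prop
    have h2 : ∀ᶠ ε in nhds (0 : ℝ), δ * ((1 + ε) ^ (2 * n) * h) * (1 + ε) ^ n < c :=
      h1.eventually_lt continuousAt_const (by simpa using hc)
    obtain ⟨ε, he, he0⟩ := ((h2.filter_mono nhdsWithin_le_nhds).and
      (self_mem_nhdsWithin (s := Set.Ioi (0 : ℝ)))).exists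
    exact ⟨ε, he0, he⟩
  have hK1 : (0 : ℝ) < K + 1 := by positivity
  have hfK : ∀ x y, dist (f x) (f y) ≤ (K + 1 : ℝ) * dist x y := fun x y =>
    (hf.dist_le_mul x y).trans (by gcongr; linarith)
  set R := remConst n (K + 1 : ℝ) ε with hR
  have hR0 : 0 ≤ R := remConst_nonneg n hK1 hε
  obtain ⟨η, hη, hηc⟩ : ∃ η : ℝ, 0 < η ∧
      (δ * ((1 + ε) ^ (2 * n) * h) + δ * (η * V)) * (1 + ε) ^ n + 3 * η * R < c := by
    have h1 : ContinuousAt (fun η : ℝ =>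
      (δ * ((1 + ε) ^ (2 * n) * h) + δ * (η * V)) * (1 + ε) ^ n + 3 * η * R) 0 := by
      fun_prop
    have h2 : ∀ᶠ η in nhds (0 : ℝ),
        (δ * ((1 + ε) ^ (2 * n) * h) + δ * (η * V)) * (1 + ε) ^ n + 3 * η * R < c :=
      h1.eventually_lt continuousAt_const (by simpa using hεc)
    obtain ⟨ε, he, he0⟩ := ((h2.filter_mono nhdsWithin_le_nhds).and
      (self_mem_nhdsWithin (s := Set.Ioi (0 : ℝ)))).exists
    exact ⟨ε, he0, he⟩
  let L : NNReal := ⟨1 + ε, by positivity⟩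
  have hL : (L : ℝ) = 1 + ε := rfl
  have hL0 : 0 < L := by rw [← NNReal.coe_pos, hL]; positivity
  obtain ⟨P, m, Z, m', hP, hPd, hZ, hZd, hvol, -⟩ := decomp hn hf hS hε hη hL
  have hPf : ∀ i, normHausdorff n d (P i) ≠ ⊤ := fun i =>
    ne_top_of_le_ne_top hfin (measure_mono (hP i).2.1)
  have hZf : ∀ i, volume (Z i) ≠ ⊤ := fun i => (hZ i).1.measure_lt_top.ne
  choose hZc hZS Y hYc hYe hYv using hZ
  have hsP : ∑ i ∈ Finset.range m, (normHausdorff n d (P i)).toReal ≤ h := by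
    rw [← ENNReal.toReal_sum fun i _ => hPf i]
    refine ENNReal.toReal_mono hfin ?_
    rw [← measure_biUnion_finset (fun i _ j _ hij => hPd hij) fun i _ => (hP i).1.measurableSet]
    exact measure_mono (Set.iUnion₂_subset fun i _ => (hP i).2.1)
  have hsZ : ∑ i ∈ Finset.range m', (volume (Z i)).toReal ≤ V := by
    rw [← ENNReal.toReal_sum fun i _ => hZf i]
    refine ENNReal.toReal_mono hVf ?_
    rw [← measure_biUnion_finset (fun i _ j _ hij => hZd hij) fun i _ => (hZc i).measurableSet]
    exact measure_mono (Set.iUnion₂_subset fun i _ => hZS i)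
  have hsY : ∑ i ∈ Finset.range m', (volume (Y i)).toReal ≤ η * V := by
    calc _ ≤ ∑ i ∈ Finset.range m', η * (volume (Z i)).toReal := by
          refine Finset.sum_le_sum fun i _ => ?_
          have := ENNReal.toReal_mono (ENNReal.mul_ne_top (by simp) (hZf i)) (hYv i)
          rwa [ENNReal.toReal_mul, ENNReal.toReal_ofReal hη.le] at this
      _ = η * ∑ i ∈ Finset.range m', (volume (Z i)).toReal := by rw [Finset.mul_sum]
      _ ≤ _ := by gcongr
  have hfZ : ∀ i, IsCompact (f '' Z i) := fun i => (hZc i).image hf.continuous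
  set C1 := ⋃ i ∈ Finset.range m, P i with hC1
  set C2 := ⋃ i ∈ Finset.range m', f '' Z i with hC2
  have hC1c : IsCompact C1 := (Finset.range m).isCompact_biUnion fun i _ => (hP i).1
  have hC2c : IsCompact C2 := (Finset.range m').isCompact_biUnion fun i _ => hfZ i
  have hrem := remainder A f hK1 hfK hS (hC1c.union hC2c) hε (w := 3 * η) (by
    have := ENNReal.toReal_mono (by simp) hvol
    rw [ENNReal.toReal_add (by simp) (by simp), ENNReal.toReal_ofReal hη.le] at this
    linarith)
  -- a gap
  set g : ℝ := (c - ((δ * ((1 + ε) ^ (2 * n) * h) + δ * (η * V)) * (1 + ε) ^ n + 3 * η * R))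
    / (1 + ε) ^ n / 2 with hg
  have hg0 : 0 < g := by
    rw [hg]
    have : 0 < (1 + ε) ^ n := by positivity
    apply div_pos (div_pos (by linarith) this) two_pos
  have hu1 := eventually_sum_ub (Finset.range m) n (fun i r => A.toFun d (r • P i))
    (fun i => δ * ((L : ℝ) ^ (2 * n) * (normHausdorff n d (P i)).toReal))
    (fun i _ c hc => (hP i).2.2.ub hn hL0 A (hP i).1 (hPf i) hc)
    (c := δ * ((1 + ε) ^ (2 * n) * h) + g) (by
      rw [← Finset.mul_sum, ← Finset.mul_sum, hL]
      have : δ * ((1 + ε) ^ (2 * n) * ∑ i ∈ Finset.range m, (normHausdorff n d (P i)).toReal) ≤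
        δ * ((1 + ε) ^ (2 * n) * h) := by gcongr
      linarith)
  have hu2 := eventually_sum_ub (Finset.range m') n (fun i r => A.toFun d (r • (f '' Z i)))
    (fun i => δ * (volume (Y i)).toReal)
    (fun i _ c hc => (hYe i).ub A (hfZ i) (hYc i) one_pos (by simpa using hc))
    (c := δ * (η * V) + g) (by
      rw [← Finset.mul_sum]
      have : δ * ∑ i ∈ Finset.range m', (volume (Y i)).toReal ≤ δ * (η * V) := by gcongr
      linarith)
  have hu := hu1.and hu2
  rw [eventually_smul_atTop (show 0 < 1 + ε by positivity)] at hu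
  filter_upwards [hrem, hu, eventually_gt_atTop 0] with r h1 h2 hr0
  obtain ⟨h2, h3⟩ := h2
  set s := (1 + ε) * r with hs
  have hcP : ∀ i, IsCompact (s • P i) := fun i => isCompact_smul_set (hP i).1 s
  have hcZ : ∀ i, IsCompact (s • (f '' Z i)) := fun i => isCompact_smul_set (hfZ i) s
  have hcC1 := isCompact_smul_set hC1c s
  have hcC2 := isCompact_smul_set hC2c s
  have h4 : A.toFun d (s • (C1 ∪ C2)) ≤ A.toFun d (s • C1) + A.toFun d (s • C2) := by
    rw [Set.smul_set_union]
    exact A.subadd hcC1.isBounded hcC1.measurableSet hcC2.isBounded hcC2.measurableSet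
  have h5 : A.toFun d (s • C1) ≤ ∑ i ∈ Finset.range m, A.toFun d (s • P i) := by
    have := A.subadd_finset (Finset.range m) (fun i => s • P i) (fun i _ => (hcP i).isBounded)
      (fun i _ => (hcP i).measurableSet)
    rwa [hC1, Set.smul_set_iUnion₂]
  have h6 : A.toFun d (s • C2) ≤ ∑ i ∈ Finset.range m', A.toFun d (s • (f '' Z i)) := by
    have := A.subadd_finset (Finset.range m') (fun i => s • (f '' Z i))
      (fun i _ => (hcZ i).isBounded) (fun i _ => (hcZ i).measurableSet)
    rwa [hC2, Set.smul_set_iUnion₂]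
  have h7 : (2 * g) * (1 + ε) ^ n =
      c - ((δ * ((1 + ε) ^ (2 * n) * h) + δ * (η * V)) * (1 + ε) ^ n + 3 * η * R) := by
    rw [hg]; field_simp
  calc _ ≤ _ := h1
    _ ≤ ((δ * ((1 + ε) ^ (2 * n) * h) + g) * s ^ n + (δ * (η * V) + g) * s ^ n) +
        3 * η * R * r ^ n := by linarith
    _ = (((δ * ((1 + ε) ^ (2 * n) * h) + δ * (η * V)) * (1 + ε) ^ n + 3 * η * R) +
        (2 * g) * (1 + ε) ^ n) * r ^ n := by rw [hs, mul_pow]; ring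
    _ = c * r ^ n := by rw [h7]; ring

end Main

lemma normHausdorff_smul (n d : ℕ) {r : ℝ} (hr : 0 < r) (C : Set (EuclideanSpace ℝ (Fin d))) :
    (normHausdorff n d (r • C)).toReal = r ^ n * (normHausdorff n d C).toReal := by
  simp only [normHausdorff, Measure.smul_apply, smul_eq_mul]
  rw [Measure.hausdorffMeasure_smul₀ (by positivity) hr.ne', NNReal.rpow_natCast,
    ENNReal.toReal_mul, ENNReal.toReal_mul, ENNReal.smul_def, smul_eq_mul, ENNReal.toReal_mul]
  simp [abs_of_pos hr]
  ring

/-- For `1 ≤ n ≤ d`, a compact `n`-rectifiable subset `C ⊆ ℝ^d` with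
`H_n(C) > 0`, and any packing bound function `A`, the limit of `A(rC)/H_n(rC)` as `r → ∞`
exists and equals `δ_{A,n}` (which depends only on `A` and `n`). -/
theorem packing_bound_limit_rectifiable (n d : ℕ) (hn : 1 ≤ n) (hnd : n ≤ d)
    (C : Set (EuclideanSpace ℝ (Fin d))) (hC : IsCompact C)
    (hrect : ∃ (f : EuclideanSpace ℝ (Fin n) → EuclideanSpace ℝ (Fin d)) (K : NNReal)
      (E : Set (EuclideanSpace ℝ (Fin n))), LipschitzWith K f ∧ IsBounded E ∧
        MeasurableSet E ∧ C = f '' E)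
    (hpos : 0 < normHausdorff n d C)
    (A : PackingBoundFunction) :
    Filter.Tendsto (fun r : ℝ => A.toFun d (r • C) / (normHausdorff n d (r • C)).toReal)
      Filter.atTop (nhds (pbfDensity A n)) := by
  obtain ⟨f, K, E, hf, hEb, -, hCE⟩ := hrect
  obtain ⟨R, hR⟩ := hEb.subset_closedBall 0
  set S := f ⁻¹' C ∩ Metric.closedBall 0 R with hSdef
  have hS : IsCompact S :=
    (isCompact_closedBall 0 R).inter_left (hC.isClosed.preimage hf.continuous)
  have hCS : f '' S = C := by
    apply Set.Subset.antisymm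
    · rintro _ ⟨x, hx, rfl⟩; exact hx.1
    · intro y hy
      have hy' := hy
      rw [hCE] at hy'
      obtain ⟨x, hx, rfl⟩ := hy'
      exact ⟨x, ⟨hy, hR hx⟩, rfl⟩
  have hfin : normHausdorff n d C ≠ ⊤ := hCS ▸ normHausdorff_ne_top hn hf hS
  have hh : 0 < (normHausdorff n d C).toReal := ENNReal.toReal_pos hpos.ne' hfin
  rw [pbfDensity_eq, tendsto_order]
  constructor
  · intro a ha
    obtain ⟨a', ha', ha''⟩ := exists_between ha
    have := main_lb hn hf hS A (c := a' * (normHausdorff n d C).toReal) (by rw [hCS]; gcongr)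
    filter_upwards [this, eventually_gt_atTop 0] with r hr hr0
    rw [normHausdorff_smul n d hr0, lt_div_iff₀ (by positivity)]
    rw [hCS] at hr
    have hp : 0 < r ^ n * (normHausdorff n d C).toReal := by positivity
    nlinarith
  · intro a ha
    obtain ⟨a', ha', ha''⟩ := exists_between ha
    have := main_ub hn hf hS A (c := a' * (normHausdorff n d C).toReal) (by rw [hCS]; gcongr)
    filter_upwards [this, eventually_gt_atTop 0] with r hr hr0
    rw [normHausdorff_smul n d hr0, div_lt_iff₀ (by positivity)]
    rw [hCS] at hr
    have hp : 0 < r ^ n * (normHausdorff n d C).toReal := by positivity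
    nlinarith
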